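/- arXiv:2211.15602 — 3 statements merged into one kernel-verified Lean document; each statement's English description precedes it below -/
import Mathlib

section
/- For all integers n ≥ 3 and k ≥ 2, the number of cycles in the digraph G_{n,k} equals ⌈α(k)^n⌉, where α(k) = (k − 1 + √((k−1)² + 4))/2; consequently F_k(n) ≥ α(k)^n. -/
open scoped Classical
open Finset

/-- Number of directed cycles in a finite directed multigraph on `Fin n`
specified by the edge-multiplicity function `G`: self-loops are cycles of
length 1, cycles of length `≥ 2` correspond to cyclic permutations, parallel
edges give distinct cycles, and cycles are counted up to cyclic rotation. -/
noncomputable def cycleCount (n : ℕ) (G : Fin n → Fin n → ℕ) : ℕ :=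
  (∑ v, G v v) +
  ∑ σ : Equiv.Perm (Fin n), if σ.IsCycle then ∏ v ∈ σ.support, G v (σ v) else 0

/-- Number of path-cycle subgraphs of a finite directed multigraph with
multiplicity function `G`: a path-cycle subgraph is given by a nonempty
vertex set `s` together with a successor map `f` on `s` (extended by the
identity off `s`) whose functional digraph on `s` is weakly connected and
has at most one source (vertex of indegree zero); parallel edges give
distinct path-cycles. -/
noncomputable def pathCycleCount {V : Type*} [Fintype V] [DecidableEq V]
    (G : V → V → ℕ) : ℕ :=
  ∑ s : Finset V, ∑ f : V → V,
    if s.Nonempty ∧ (∀ v, v ∉ s → f v = v) ∧ (∀ v ∈ s, f v ∈ s) ∧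
        (∀ u ∈ s, ∀ v ∈ s,
          Relation.ReflTransGen (fun a b => (a ∈ s ∧ f a = b) ∨ (b ∈ s ∧ f b = a)) u v) ∧
        (s.filter fun v => ∀ u ∈ s, f u ≠ v).card ≤ 1
    then ∏ v ∈ s, G v (f v) else 0

/-- `α(k) = (k - 1 + √((k-1)² + 4)) / 2`. -/
noncomputable def alphaK (k : ℕ) : ℝ :=
  ((k : ℝ) - 1 + Real.sqrt (((k : ℝ) - 1) ^ 2 + 4)) / 2

/-- Multiplicity function of the digraph `G_{n,k}`: on vertices `Fin n`,
edges `(i, i+1 mod n)` have multiplicity `k - 1` and edges `(i, i+2 mod n)`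
have multiplicity `1`. -/
def GnkMult (n k : ℕ) : Fin n → Fin n → ℕ := fun i j =>
  if (j.val + n - i.val) % n = 1 then k - 1
  else if (j.val + n - i.val) % n = 2 then 1
  else 0

/-- Multiplicity function of the digraph `G'_{n,k}`: on vertices `Fin n`,
edges `(i, i+1 mod n)` have multiplicity `1` and edges `(i, i+2 mod n)`
have multiplicity `k - 1`. -/
def Gnk'Mult (n k : ℕ) : Fin n → Fin n → ℕ := fun i j =>
  if (j.val + n - i.val) % n = 1 then 1
  else if (j.val + n - i.val) % n = 2 then k - 1
  else 0

/-- Edge relation of the simple digraph `G_m`: `(i, j)` is an edge whenever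
`j - i ≡ 1 (mod m)` or `j - i ≡ 2 (mod m)`. -/
def GmRel (m : ℕ) : Fin m → Fin m → Prop := fun i j =>
  (j.val + m - i.val) % m = 1 ∨ (j.val + m - i.val) % m = 2

/-- The sequence `S_m` with `S_0 = 1`, `S_1 = k - 1`,
`S_m = (k-1) S_{m-1} + S_{m-2}`. -/
def Sseq (k : ℕ) : ℕ → ℕ
  | 0 => 1
  | 1 => k - 1
  | (m + 2) => (k - 1) * Sseq k (m + 1) + Sseq k m

/-- `F_k(n)`: the maximum number of directed cycles over all digraphs on `n`
vertices with every outdegree exactly `k` in which every multi-edge between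
distinct vertices has multiplicity at most `k - 1`. -/
noncomputable def Fk (k n : ℕ) : ℕ :=
  sSup {c : ℕ | ∃ G : Fin n → Fin n → ℕ,
    (∀ v, (∑ u, G v u) = k) ∧ (∀ u v : Fin n, u ≠ v → G u v ≤ k - 1) ∧
    c = cycleCount n G}

/-- Weak connectivity (same connected component) in a directed multigraph. -/
def MConn {n : ℕ} (G : Fin n → Fin n → ℕ) : Fin n → Fin n → Prop :=
  Relation.ReflTransGen (fun a b => 0 < G a b ∨ 0 < G b a)

/-- A deterministic Markov decision problem with state space `S`, action
space `A` (all actions available at every state), deterministic transition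
function `T`, reward function `R` and discount factor `gamma ∈ [0, 1)`. -/
structure DMDP (S A : Type*) where
  T : S → A → S
  R : S → A → ℝ
  gamma : ℝ
  gamma_nonneg : 0 ≤ gamma
  gamma_lt_one : gamma < 1

namespace DMDP

variable {S A : Type*}

/-- The trajectory of states obtained by following policy `π` from `s`. -/
def traj (M : DMDP S A) (π : S → A) (s : S) (t : ℕ) : S :=
  (fun x => M.T x (π x))^[t] s

/-- The value function `V^π(s) = Σ_t γ^t R(s_t, π(s_t))`. -/
noncomputable def V (M : DMDP S A) (π : S → A) (s : S) : ℝ :=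
  ∑' t : ℕ, M.gamma ^ t * M.R (M.traj π s t) (π (M.traj π s t))

/-- The action value function `Q^π(s, a) = R(s, a) + γ V^π(T(s, a))`. -/
noncomputable def Q (M : DMDP S A) (π : S → A) (s : S) (a : A) : ℝ :=
  M.R s a + M.gamma * M.V π (M.T s a)

/-- `π ≺ π'`: pointwise `V^π ≤ V^{π'}` with strict inequality somewhere. -/
def PLt (M : DMDP S A) (π π' : S → A) : Prop :=
  (∀ s, M.V π s ≤ M.V π' s) ∧ ∃ s, M.V π s < M.V π' s

/-- `π'` is obtained from `π` by policy improvement with arbitrary action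
selection. -/
def ImpStep (M : DMDP S A) (π π' : S → A) : Prop :=
  π' ≠ π ∧ ∀ s, π' s ≠ π s → M.V π s < M.Q π s (π' s)

/-- `π'` is obtained from `π` by policy improvement with max-gain action
selection. -/
def MaxGainStep (M : DMDP S A) (π π' : S → A) : Prop :=
  π' ≠ π ∧ ∀ s, π' s ≠ π s →
    M.V π s < M.Q π s (π' s) ∧
    ∀ a, M.V π s < M.Q π s a → M.Q π s a ≤ M.Q π s (π' s)

/-- The first time step at which a previously visited state recurs on the
trajectory of `π` from `s`. -/
noncomputable def pcLen (M : DMDP S A) (π : S → A) (s : S) : ℕ :=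
  sInf {t : ℕ | ∃ t' < t, M.traj π s t' = M.traj π s t}

/-- The path-cycle `P^π_s`: the sequence of state–action–state triples
`(s_t, π(s_t), s_{t+1})` for `t` up to (but excluding) the first recurrence
of a previously visited state. -/
noncomputable def pathCycle (M : DMDP S A) (π : S → A) (s : S) : List (S × A × S) :=
  (List.range (M.pcLen π s)).map fun t =>
    (M.traj π s t, π (M.traj π s t), M.traj π s (t + 1))

/-- The multiplicity function of the DMDP digraph `G_M`: one edge from `s`
to `T(s, a)` for every action `a`. -/
noncomputable def digraph (M : DMDP S A) [Fintype A] : S → S → ℕ :=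
  fun s s' => (Finset.univ.filter fun a => M.T s a = s').card

/-- A state is non-branching if all actions lead to the same next state. -/
def NonBranching (M : DMDP S A) (s : S) : Prop := ∃ s', ∀ a, M.T s a = s'

/-- The relation `∼` on path-cycles: same sequence of states, and wherever
the actions differ the state is non-branching. -/
def PCSim (M : DMDP S A) (P₁ P₂ : List (S × A × S)) : Prop :=
  P₁.length = P₂.length ∧
  ∀ (t : ℕ) (h₁ : t < P₁.length) (h₂ : t < P₂.length),
    (P₁.get ⟨t, h₁⟩).1 = (P₂.get ⟨t, h₂⟩).1 ∧
    (P₁.get ⟨t, h₁⟩).2.2 = (P₂.get ⟨t, h₂⟩).2.2 ∧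
    ((P₁.get ⟨t, h₁⟩).2.1 ≠ (P₂.get ⟨t, h₂⟩).2.1 → M.NonBranching (P₁.get ⟨t, h₁⟩).1)

/-- The relation `≈` on path-cycles: they differ only in equivalent edges,
i.e. have the same sequences of source and target states. -/
def PCApprox (_M : DMDP S A) (P₁ P₂ : List (S × A × S)) : Prop :=
  P₁.length = P₂.length ∧
  ∀ (t : ℕ) (h₁ : t < P₁.length) (h₂ : t < P₂.length),
    (P₁.get ⟨t, h₁⟩).1 = (P₂.get ⟨t, h₂⟩).1 ∧
    (P₁.get ⟨t, h₁⟩).2.2 = (P₂.get ⟨t, h₂⟩).2.2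

end DMDP

/-!
Every edge of `G_{n,k}` advances by one or two steps around `ℤ/n`. If a cycle ever skips a vertex
that it also visits, injectivity forces it to advance by two everywhere, so it is the square of the
rotation, which is a cycle exactly when `n` is odd. Any other cycle moves each of its vertices to
the next one it visits, hence is determined by its vertex set, and the vertex sets that occur are
those missing no two consecutive vertices. Weighting these sets by edge multiplicities, a `2 × 2`
transfer matrix with trace `k - 1` and determinant `-1` gives the total `α(k)^n + (-1/α(k))^n`.
The second summand lies strictly between `-1` and `1` and has the sign of `(-1)^n`, so the
exceptional cycle for odd `n` is exactly what rounds `α(k)^n` up.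
-/

theorem matrix_pow_succ_apply_eq_sum_walks {ι R : Type*} [Fintype ι] [DecidableEq ι]
    [CommSemiring R] (A : Matrix ι ι R) (n : ℕ) (x y : ι) :
    (A ^ (n + 1)) x y = ∑ f : Fin n → ι, ∏ i : Fin (n + 1),
      A ((Fin.cons x f : Fin (n + 1) → ι) i) ((Fin.snoc f y : Fin (n + 1) → ι) i) := by
  induction n generalizing x with
  | zero => simp [Fin.snoc]
  | succ n ih =>
    rw [pow_succ', Matrix.mul_apply, ← (Fin.consEquiv fun _ : Fin (n + 1) => ι).sum_comp,
      Fintype.sum_prod_type]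
    refine sum_congr rfl fun z _ => ?_
    rw [ih, mul_sum]
    refine sum_congr rfl fun f _ => ?_
    have hsnoc : (Fin.snoc (Fin.cons z f : Fin (n + 1) → ι) y : Fin (n + 2) → ι) =
        Fin.cons z (Fin.snoc f y : Fin (n + 1) → ι) := (Fin.cons_snoc_eq_snoc_cons z f y).symm
    have hcons : Fin.consEquiv (fun _ => ι) (z, f) = (Fin.cons z f : Fin (n + 1) → ι) := rfl
    rw [hcons, hsnoc, Fin.prod_univ_succ (n := n + 1)]
    simp only [Fin.cons_zero, Fin.cons_succ]

theorem trace_pow_eq_sum_closed_walks {ι R : Type*} [Fintype ι] [DecidableEq ι]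
    [CommSemiring R] (A : Matrix ι ι R) (n : ℕ) [NeZero n] :
    (A ^ n).trace = ∑ f : Fin n → ι, ∏ i, A (f i) (f (i + 1)) := by
  obtain ⟨m, rfl⟩ := Nat.exists_eq_succ_of_ne_zero (NeZero.ne n)
  rw [← (Fin.consEquiv fun _ : Fin (m + 1) => ι).sum_comp, Fintype.sum_prod_type, Matrix.trace]
  refine sum_congr rfl fun x _ => ?_
  rw [Matrix.diag_apply, matrix_pow_succ_apply_eq_sum_walks]
  refine sum_congr rfl fun f _ => prod_congr rfl fun i _ => ?_
  congr 1
  induction i using Fin.lastCases <;> simp [Fin.consEquiv_apply]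

theorem trace_pow_fin_two_eq_add_pow {R : Type*} [CommRing R] (A : Matrix (Fin 2) (Fin 2) R)
    {x y : R} (htrace : A.trace = x + y) (hdet : A.det = x * y) (n : ℕ) :
    (A ^ n).trace = x ^ n + y ^ n := by
  have hsq : A ^ 2 = A.trace • A - A.det • 1 := by
    ext i j
    fin_cases i <;> fin_cases j <;>
      simp [sq, Matrix.mul_apply, Matrix.trace_fin_two, Matrix.det_fin_two] <;> ring
  induction n using Nat.twoStepInduction with
  | zero => simp [one_add_one_eq_two]
  | one => simpa using htrace
  | more n ih ih' =>
    rw [pow_add, hsq, mul_sub, mul_smul_comm, mul_smul_comm, ← pow_succ, mul_one,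
      Matrix.trace_sub, Matrix.trace_smul, Matrix.trace_smul, ih, ih', htrace, hdet,
      smul_eq_mul, smul_eq_mul]
    ring

theorem isCycle_finRotate_sq_iff {n : ℕ} (hn : 2 ≤ n) : (finRotate n ^ 2).IsCycle ↔ Odd n := by
  have hcycle := isCycle_finRotate_of_le hn
  rw [hcycle.pow_iff, hcycle.orderOf, support_finRotate_of_le hn, card_univ, Fintype.card_fin,
    Nat.coprime_two_left]

section ShortSteps

open scoped Fin.CommRing

variable {n : ℕ} [NeZero n]

theorem cyclic_induction {P : Fin n → Prop} {v : Fin n} (base : P v)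
    (step : ∀ u, P u → P (u + 1)) (u : Fin n) : P u := by
  have hadd (j : ℕ) : P (v + j) := by
    induction j with
    | zero => simpa using base
    | succ j ih => simpa [add_assoc] using step _ ih
  simpa using hadd (u - v).val

theorem fin_one_ne_zero (hn : 1 < n) : (1 : Fin n) ≠ 0 := by
  rw [Ne, Fin.ext_iff]
  simp [Nat.mod_eq_of_lt hn]

theorem fin_two_ne_zero (hn : 2 < n) : (2 : Fin n) ≠ 0 := by
  rw [Ne, Fin.ext_iff]
  simp [Nat.mod_eq_of_lt hn]

theorem fin_add_two_ne_add_one (hn : 1 < n) (v : Fin n) : v + 2 ≠ v + 1 := by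
  rw [← one_add_one_eq_two, ← add_assoc, Ne, add_eq_left]
  exact fin_one_ne_zero hn

/-- A vertex cover of the undirected cycle on `Fin n`: a set missing no two consecutive vertices.
These are the vertex sets of the cycles that move every vertex to the next one they visit. -/
def IsCyclicVertexCover (s : Finset (Fin n)) : Prop :=
  ∀ v, v ∈ s ∨ v + 1 ∈ s

/-- The successor of `v` in the cyclic order of `s`, and `v` itself if `v ∉ s`. It is meant for
cyclic vertex covers `s`, whose gaps have length at most two. -/
def nextVertex (s : Finset (Fin n)) (v : Fin n) : Fin n :=
  if v ∈ s then if v + 1 ∈ s then v + 1 else v + 2 else v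

/-- The state `1` of the transfer matrix stands for a vertex inside `s`, the state `0` for one
outside. -/
theorem prod_transferMatrix_eq_ite_isCyclicVertexCover {R : Type*} [CommSemiring R] (a b : R)
    (s : Finset (Fin n)) :
    ∏ v, (!![0, 1; b, a] : Matrix (Fin 2) (Fin 2) R)
        (if v ∈ s then 1 else 0) (if v + 1 ∈ s then 1 else 0) =
      if IsCyclicVertexCover s then ∏ v ∈ s, (if v + 1 ∈ s then a else b) else 0 := by
  split_ifs with hs
  · refine (prod_subset_one_on_sdiff (subset_univ s) (fun v hv => ?_) fun v hv => ?_).symm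
    · have hv' : v ∉ s := (mem_sdiff.1 hv).2
      simp [hv', (hs v).resolve_left hv']
    · by_cases h : v + 1 ∈ s <;> simp [hv, h]
  · simp only [IsCyclicVertexCover, not_forall, not_or] at hs
    obtain ⟨v, hv, hv'⟩ := hs
    exact prod_eq_zero (mem_univ v) (by simp [hv, hv'])

theorem sum_isCyclicVertexCover_eq_trace_pow {R : Type*} [CommSemiring R] (a b : R) :
    ∑ s : Finset (Fin n) with IsCyclicVertexCover s, ∏ v ∈ s, (if v + 1 ∈ s then a else b) =
      (!![0, 1; b, a] ^ n : Matrix (Fin 2) (Fin 2) R).trace := by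
  rw [trace_pow_eq_sum_closed_walks, sum_filter]
  refine sum_nbij' (fun s v => if v ∈ s then 1 else 0) (fun f => univ.filter (f · = 1))
    (fun _ _ => mem_univ _) (fun _ _ => mem_univ _) (fun s _ => by ext; simp) (fun f _ => ?_)
    fun s _ => (prod_transferMatrix_eq_ite_isCyclicVertexCover a b s).symm
  funext v
  rcases Fin.exists_fin_two.1 ⟨f v, rfl⟩ with h | h <;> simp [h]

namespace IsCyclicVertexCover

variable {s : Finset (Fin n)}

theorem nextVertex_surjective (hs : IsCyclicVertexCover s) :
    Function.Surjective (nextVertex s) := by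
  intro w
  by_cases hw : w ∈ s
  · by_cases hw₁ : w - 1 ∈ s
    · exact ⟨w - 1, by simp [nextVertex, hw, hw₁]⟩
    · have hw₂ : w - 2 + 1 = w - 1 := by ring
      have hmem : w - 2 ∈ s := (hs (w - 2)).resolve_right (hw₂ ▸ hw₁)
      exact ⟨w - 2, by simp [nextVertex, hmem, hw₂, hw₁]⟩
  · exact ⟨w, if_neg hw⟩

/-- The permutation moving each vertex of a cyclic vertex cover to the next one, and fixing all
other vertices. -/
noncomputable def nextPerm (hs : IsCyclicVertexCover s) : Equiv.Perm (Fin n) :=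
  Equiv.ofBijective (nextVertex s) hs.nextVertex_surjective.bijective_of_finite

@[simp]
theorem nextPerm_apply (hs : IsCyclicVertexCover s) (v : Fin n) :
    hs.nextPerm v = nextVertex s v := rfl

theorem support_nextPerm (hs : IsCyclicVertexCover s) (hn : 2 < n) : hs.nextPerm.support = s := by
  ext v
  rw [Equiv.Perm.mem_support, nextPerm_apply, nextVertex]
  split_ifs with hv <;> simp [hv, fin_two_ne_zero hn, fin_one_ne_zero (by omega : 1 < n)]

theorem nonempty (hs : IsCyclicVertexCover s) : s.Nonempty :=
  (hs 0).elim (fun h => ⟨_, h⟩) fun h => ⟨_, h⟩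

theorem isCycle_nextPerm (hs : IsCyclicVertexCover s) (hn : 2 < n) : hs.nextPerm.IsCycle := by
  obtain ⟨v, hv⟩ := hs.nonempty
  have moved_iff (u : Fin n) : hs.nextPerm u ≠ u ↔ u ∈ s := by
    rw [← Equiv.Perm.mem_support, hs.support_nextPerm hn]
  have reach : ∀ u, (u ∈ s → hs.nextPerm.SameCycle v u) ∧
      (u + 1 ∈ s → hs.nextPerm.SameCycle v (u + 1)) := by
    refine cyclic_induction (v := v) ⟨fun _ => .refl _ v, fun hv₁ => ?_⟩
      fun u ⟨hu, hu₁⟩ => ⟨hu₁, fun hu₂ => ?_⟩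
    · exact ⟨1, by simp [nextVertex, hv, hv₁]⟩
    · rw [add_assoc, one_add_one_eq_two] at hu₂ ⊢
      by_cases hmem : u + 1 ∈ s
      · convert Equiv.Perm.sameCycle_apply_right.2 (hu₁ hmem) using 1
        simp [nextVertex, hmem, add_assoc, one_add_one_eq_two, hu₂]
      · have hmem₀ := (hs u).resolve_right hmem
        convert Equiv.Perm.sameCycle_apply_right.2 (hu hmem₀) using 1
        simp [nextVertex, hmem₀, hmem]
  exact ⟨v, (moved_iff v).2 hv, fun u hu => (reach u).1 ((moved_iff u).1 hu)⟩

end IsCyclicVertexCover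

theorem finRotate_sq_apply (v : Fin n) : (finRotate n ^ 2) v = v + 2 := by
  rw [sq, Equiv.Perm.mul_apply, finRotate_apply, finRotate_apply, add_assoc, one_add_one_eq_two]

theorem support_finRotate_sq (hn : 2 < n) : (finRotate n ^ 2).support = univ := by
  ext v
  simp [finRotate_sq_apply, fin_two_ne_zero hn]

/-- The permutation advances each vertex that it moves by one or two steps, as a cycle of `G_{n,k}`
does. -/
def HasShortSteps (σ : Equiv.Perm (Fin n)) : Prop :=
  ∀ v ∈ σ.support, σ v = v + 1 ∨ σ v = v + 2

namespace HasShortSteps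

variable {σ : Equiv.Perm (Fin n)}

theorem isCyclicVertexCover_support (hσ : HasShortSteps σ) (hne : σ ≠ 1) :
    IsCyclicVertexCover σ.support := by
  obtain ⟨v, hv⟩ := nonempty_iff_ne_empty.2 (mt Equiv.Perm.support_eq_empty_iff.1 hne)
  refine cyclic_induction (.inl hv) fun u hu => ?_
  rcases hu with hu | hu
  · have himage := Equiv.Perm.apply_mem_support.2 hu
    rcases hσ u hu with h | h
    · exact .inl (h ▸ himage)
    · exact .inr (by rwa [add_assoc, one_add_one_eq_two, ← h])
  · exact .inl hu

theorem eq_finRotate_sq (hσ : HasShortSteps σ) {v : Fin n} (hv : v ∈ σ.support)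
    (hv₁ : v + 1 ∈ σ.support) (hstep : σ v = v + 2) : σ = finRotate n ^ 2 := by
  suffices h : ∀ u, u ∈ σ.support ∧ u + 1 ∈ σ.support ∧ σ u = u + 2 from
    Equiv.ext fun u => (h u).2.2.trans (finRotate_sq_apply u).symm
  refine cyclic_induction ⟨hv, hv₁, hstep⟩ fun u ⟨hu, hu₁, hstep⟩ => ⟨hu₁, ?_, ?_⟩
  · rw [add_assoc, one_add_one_eq_two, ← hstep]
    exact Equiv.Perm.apply_mem_support.2 hu
  · refine (hσ _ hu₁).resolve_left fun h => Equiv.Perm.mem_support.1 hu ?_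
    have hfix : u + 1 = u := σ.injective (by rw [h, hstep, add_assoc, one_add_one_eq_two])
    rw [hstep, ← one_add_one_eq_two, ← add_assoc, hfix, hfix]

theorem apply_eq_nextVertex (hσ : HasShortSteps σ) (hne : σ ≠ finRotate n ^ 2) (v : Fin n) :
    σ v = nextVertex σ.support v := by
  unfold nextVertex
  split_ifs with hv hv₁
  · exact (hσ v hv).resolve_right fun h => hne (hσ.eq_finRotate_sq hv hv₁ h)
  · exact (hσ v hv).resolve_left fun h => hv₁ (h ▸ Equiv.Perm.apply_mem_support.2 hv)
  · exact Equiv.Perm.notMem_support.1 hv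

end HasShortSteps

theorem IsCyclicVertexCover.hasShortSteps_nextPerm {s : Finset (Fin n)}
    (hs : IsCyclicVertexCover s) : HasShortSteps hs.nextPerm := by
  intro v hmoved
  have hv : v ∈ s := by
    by_contra h
    exact Equiv.Perm.mem_support.1 hmoved (if_neg h)
  by_cases h : v + 1 ∈ s <;> simp [nextVertex, hv, h]

theorem IsCyclicVertexCover.nextPerm_ne_finRotate_sq {s : Finset (Fin n)}
    (hs : IsCyclicVertexCover s) (hn : 2 < n) : hs.nextPerm ≠ finRotate n ^ 2 := by
  intro h
  have hs_univ : s = univ := by rw [← hs.support_nextPerm hn, h, support_finRotate_sq hn]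
  have h₀ : nextVertex s 0 = 0 + 2 := by rw [← hs.nextPerm_apply, h, finRotate_sq_apply]
  simp only [nextVertex, hs_univ, mem_univ, if_true] at h₀
  exact fin_add_two_ne_add_one (by omega) 0 h₀.symm

theorem sum_isCycle_hasShortSteps_eq_sum_isCyclicVertexCover {M : Type*} [AddCommMonoid M]
    (hn : 2 < n) (w : Finset (Fin n) → (Fin n → Fin n) → M) :
    ∑ σ : Equiv.Perm (Fin n) with σ.IsCycle ∧ HasShortSteps σ ∧ σ ≠ finRotate n ^ 2,
        w σ.support σ =
      ∑ s : Finset (Fin n) with IsCyclicVertexCover s, w s (nextVertex s) := by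
  have hcover {σ : Equiv.Perm (Fin n)}
      (hσ : σ ∈ univ.filter fun σ => σ.IsCycle ∧ HasShortSteps σ ∧ σ ≠ finRotate n ^ 2) :
      IsCyclicVertexCover σ.support ∧ ⇑σ = nextVertex σ.support := by
    obtain ⟨-, hcycle, hshort, hne⟩ := mem_filter.1 hσ
    exact ⟨hshort.isCyclicVertexCover_support hcycle.ne_one,
      funext (hshort.apply_eq_nextVertex hne)⟩
  refine sum_bij' (fun σ _ => σ.support) (fun s hs => (mem_filter.1 hs).2.nextPerm)
    (fun σ hσ => mem_filter.2 ⟨mem_univ _, (hcover hσ).1⟩) (fun s hs => ?_) (fun σ hσ => ?_)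
    (fun s hs => (mem_filter.1 hs).2.support_nextPerm hn) fun σ hσ => ?_
  · have hs' := (mem_filter.1 hs).2
    exact mem_filter.2 ⟨mem_univ _, hs'.isCycle_nextPerm hn, hs'.hasShortSteps_nextPerm,
      hs'.nextPerm_ne_finRotate_sq hn⟩
  · exact Equiv.ext fun v => (congrFun (hcover hσ).2 v).symm
  · rw [← (hcover hσ).2]

theorem prod_support_eq_zero_of_not_hasShortSteps {R : Type*} [CommMonoidWithZero R]
    {G : Fin n → Fin n → R} (hG : ∀ u v, G u v ≠ 0 → v = u + 1 ∨ v = u + 2)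
    {σ : Equiv.Perm (Fin n)} (hσ : ¬ HasShortSteps σ) : ∏ v ∈ σ.support, G v (σ v) = 0 := by
  simp only [HasShortSteps, not_forall] at hσ
  obtain ⟨v, hv, hstep⟩ := hσ
  exact prod_eq_zero hv (not_not.1 (mt (hG v (σ v)) hstep))

theorem cycleCount_eq_sum_isCyclicVertexCover (hn : 2 < n) {G : Fin n → Fin n → ℕ}
    (hG : ∀ u v, G u v ≠ 0 → v = u + 1 ∨ v = u + 2) :
    cycleCount n G =
      ∑ s : Finset (Fin n) with IsCyclicVertexCover s, ∏ v ∈ s, G v (nextVertex s v) +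
        if Odd n then ∏ v, G v (v + 2) else 0 := by
  have hloop (v : Fin n) : G v v = 0 := by
    by_contra h
    simpa [fin_two_ne_zero hn, fin_one_ne_zero (by omega : 1 < n)] using hG v v h
  have hsplit (σ : Equiv.Perm (Fin n)) :
      (if σ.IsCycle then ∏ v ∈ σ.support, G v (σ v) else 0) =
        (if σ.IsCycle ∧ HasShortSteps σ ∧ σ ≠ finRotate n ^ 2 then
          ∏ v ∈ σ.support, G v (σ v) else 0) +
        if σ = finRotate n ^ 2 then if Odd n then ∏ v, G v (v + 2) else 0 else 0 := by
    by_cases hσ : σ = finRotate n ^ 2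
    · simp [hσ, isCycle_finRotate_sq_iff hn.le, support_finRotate_sq hn, finRotate_sq_apply]
    · by_cases hshort : HasShortSteps σ
      · simp [hσ, hshort]
      · simp [hσ, hshort, prod_support_eq_zero_of_not_hasShortSteps hG hshort]
  simp only [cycleCount, hloop, sum_const_zero, zero_add, hsplit, sum_add_distrib]
  rw [← sum_filter, sum_isCycle_hasShortSteps_eq_sum_isCyclicVertexCover hn
    fun s f => ∏ v ∈ s, G v (f v), Fintype.sum_ite_eq']

theorem GnkMult_apply (hn : 2 < n) (k : ℕ) (i j : Fin n) :
    GnkMult n k i j = if j = i + 1 then k - 1 else if j = i + 2 then 1 else 0 := by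
  have hdiff : (j.val + n - i.val) % n = (j - i).val := by
    rw [Fin.val_sub]
    congr 1
    omega
  have hone : (j - i).val = 1 ↔ j = i + 1 := by
    rw [← sub_eq_iff_eq_add', Fin.ext_iff]
    simp [Nat.mod_eq_of_lt (by omega : 1 < n)]
  have htwo : (j - i).val = 2 ↔ j = i + 2 := by
    rw [← sub_eq_iff_eq_add', Fin.ext_iff]
    simp [Nat.mod_eq_of_lt hn]
  simp only [GnkMult, hdiff, hone, htwo]

theorem GnkMult_add_two (hn : 2 < n) (k : ℕ) (v : Fin n) : GnkMult n k v (v + 2) = 1 := by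
  rw [GnkMult_apply hn, if_neg (fin_add_two_ne_add_one (by omega) v), if_pos rfl]

theorem GnkMult_nextVertex (hn : 2 < n) (k : ℕ) {s : Finset (Fin n)} {v : Fin n} (hv : v ∈ s) :
    GnkMult n k v (nextVertex s v) = if v + 1 ∈ s then k - 1 else 1 := by
  rw [nextVertex, if_pos hv]
  split_ifs
  · rw [GnkMult_apply hn, if_pos rfl]
  · exact GnkMult_add_two hn k v

theorem cycleCount_GnkMult_eq_trace_pow (hn : 2 < n) (k : ℕ) :
    (cycleCount n (GnkMult n k) : ℝ) =
      (!![0, 1; 1, ((k - 1 : ℕ) : ℝ)] ^ n).trace + if Odd n then 1 else 0 := by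
  have hG (u v : Fin n) (h : GnkMult n k u v ≠ 0) : v = u + 1 ∨ v = u + 2 := by
    rw [GnkMult_apply hn] at h
    by_contra! hne
    simp [hne] at h
  rw [cycleCount_eq_sum_isCyclicVertexCover hn hG, ← sum_isCyclicVertexCover_eq_trace_pow]
  simp only [GnkMult_add_two hn, prod_const_one]
  push_cast
  congr 1
  refine sum_congr rfl fun s _ => prod_congr rfl fun v hv => ?_
  rw [GnkMult_nextVertex hn k hv]
  push_cast
  rfl

theorem sum_GnkMult (hn : 2 < n) {k : ℕ} (hk : 1 ≤ k) (v : Fin n) : ∑ u, GnkMult n k v u = k := by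
  have hzero (u : Fin n) (h : u ∉ ({v + 1, v + 2} : Finset (Fin n))) : GnkMult n k v u = 0 := by
    simp_all [GnkMult_apply hn]
  rw [← sum_subset (subset_univ {v + 1, v + 2}) fun u _ => hzero u,
    sum_pair (fin_add_two_ne_add_one (by omega) v).symm,
    GnkMult_add_two hn, GnkMult_apply hn, if_pos rfl]
  omega

end ShortSteps

theorem GnkMult_le {k : ℕ} (hk : 2 ≤ k) (n : ℕ) (u v : Fin n) : GnkMult n k u v ≤ k - 1 := by
  unfold GnkMult
  split_ifs <;> omega

theorem cycleCount_le_Fk {n k : ℕ} {G : Fin n → Fin n → ℕ} (hdeg : ∀ v, ∑ u, G v u = k)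
    (hmult : ∀ u v, u ≠ v → G u v ≤ k - 1) : cycleCount n G ≤ Fk k n := by
  refine le_csSup ?_ ⟨G, hdeg, hmult, rfl⟩
  refine ((Set.finite_Iic fun _ _ => k).image (cycleCount n)).bddAbove.mono ?_
  rintro _ ⟨H, hH, -, rfl⟩
  exact ⟨H, fun v u => hH v ▸ single_le_sum (fun _ _ => Nat.zero_le _) (mem_univ u), rfl⟩

theorem alphaK_sq (k : ℕ) : alphaK k ^ 2 = ((k : ℝ) - 1) * alphaK k + 1 := by
  have hsqrt := Real.sq_sqrt (by positivity : 0 ≤ ((k : ℝ) - 1) ^ 2 + 4)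
  unfold alphaK
  linear_combination hsqrt / 4

theorem one_lt_alphaK {k : ℕ} (hk : 2 ≤ k) : 1 < alphaK k := by
  have hk' : (2 : ℝ) ≤ k := by exact_mod_cast hk
  have hsqrt : 1 < √(((k : ℝ) - 1) ^ 2 + 4) := Real.lt_sqrt_of_sq_lt (by nlinarith)
  unfold alphaK
  linarith

theorem cycleCount_GnkMult {n k : ℕ} (hn : 2 < n) (hk : 2 ≤ k) :
    (cycleCount n (GnkMult n k) : ℝ) =
      alphaK k ^ n + (-(alphaK k)⁻¹) ^ n + if Odd n then 1 else 0 := by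
  have : NeZero n := ⟨by omega⟩
  have hα : alphaK k ≠ 0 := (zero_lt_one.trans (one_lt_alphaK hk)).ne'
  rw [cycleCount_GnkMult_eq_trace_pow hn, trace_pow_fin_two_eq_add_pow _ (x := alphaK k)
    (y := -(alphaK k)⁻¹)]
  · rw [Matrix.trace_fin_two_of, Nat.cast_sub (by omega)]
    field_simp
    linear_combination -alphaK_sq k
  · simp [Matrix.det_fin_two_of, hα]

theorem ceil_pow_eq_of_eq_add_neg_inv_pow {K : Type*} [Field K] [LinearOrder K]
    [IsStrictOrderedRing K] [FloorRing K] {x : K} (hx : 1 < x) {n : ℕ} (hn : n ≠ 0) {c : ℤ}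
    (hc : (c : K) = x ^ n + (-x⁻¹) ^ n + if Odd n then 1 else 0) : ⌈x ^ n⌉ = c := by
  have hinv_pos : 0 < x⁻¹ ^ n := pow_pos (inv_pos.2 (zero_lt_one.trans hx)) n
  have hinv_lt : x⁻¹ ^ n < 1 := pow_lt_one₀ (inv_nonneg.2 (zero_le_one.trans hx.le))
    (inv_lt_one_of_one_lt₀ hx) hn
  rw [Int.ceil_eq_iff, hc]
  rcases Nat.even_or_odd n with h | h
  · rw [h.neg_pow, if_neg (Nat.not_odd_iff_even.2 h)]
    constructor <;> linarith
  · rw [h.neg_pow, if_pos h]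
    constructor <;> linarith

theorem stmt_6 (n k : ℕ) (hn : 3 ≤ n) (hk : 2 ≤ k) :
    (cycleCount n (GnkMult n k) : ℤ) = ⌈alphaK k ^ n⌉ ∧
    alphaK k ^ n ≤ (Fk k n : ℝ) := by
  have : NeZero n := ⟨by omega⟩
  have hcount : (cycleCount n (GnkMult n k) : ℤ) = ⌈alphaK k ^ n⌉ :=
    (ceil_pow_eq_of_eq_add_neg_inv_pow (one_lt_alphaK hk) (by omega)
      (by exact_mod_cast cycleCount_GnkMult hn hk)).symm
  have hle : cycleCount n (GnkMult n k) ≤ Fk k n :=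
    cycleCount_le_Fk (sum_GnkMult hn (by omega)) fun u v _ => GnkMult_le hk n u v
  refine ⟨hcount, ?_⟩
  calc alphaK k ^ n ≤ (⌈alphaK k ^ n⌉ : ℝ) := Int.le_ceil _
    _ = cycleCount n (GnkMult n k) := by rw [← hcount, Int.cast_natCast]
    _ ≤ Fk k n := by exact_mod_cast hle
end

section
/- For all integers n ≥ 1 and k ≥ 2, every digraph G with n vertices, no multi-edges (self-loops allowed), and every vertex of outdegree at most k satisfies C'(G) ≤ n²·k·((k+1)!)^((n−1)/(k+1)), where C'(G) is the number of path-cycle subgraphs of G. -/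
open scoped Classical
open Finset

/-!
A path-cycle with first vertex `u` and last path vertex `v` becomes a permutation of the vertex set
once the edge leaving `v` is redirected to `u`, all other vertices being fixed, and it is recovered
from `u`, `v`, the discarded edge and this permutation. There are at most `n ^ 2 * k` choices of the
first three. For given `u` and `v` the permutation is prescribed at `v` and takes at most `k + 1`
values at every other vertex, so Brègman's inequality for permanents bounds the number of
permutations by `(k + 1)! ^ ((n - 1) / (k + 1))`.

Brègman's inequality is proved for an arbitrary set `S` of bijections, following Schrijver: compare
`log #S` with the average of the logarithms of the numbers of bijections in `S` that agree with a
random `σ ∈ S` at a random point, and apply induction to the latter.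
-/

/-- The logarithm of the geometric mean `(r!) ^ (1 / r)` of `1, …, r`, the contribution of a row
with `r` ones to Brègman's bound; its value at `r = 0` is `0`. -/
noncomputable def logFactorialMean (r : ℕ) : ℝ := Real.log r.factorial / r

theorem mul_logFactorialMean (r : ℕ) : r * logFactorialMean r = Real.log r.factorial := by
  rcases eq_or_ne r 0 with rfl | hr
  · simp
  · exact mul_div_cancel₀ _ (Nat.cast_ne_zero.2 hr)

theorem log_factorial_succ (r : ℕ) :
    Real.log (r + 1).factorial = Real.log (r + 1) + Real.log r.factorial := by
  rw [Nat.factorial_succ]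
  push_cast
  exact Real.log_mul (by positivity) (by positivity)

theorem log_factorial_le_mul_log (r : ℕ) : Real.log r.factorial ≤ r * Real.log r := by
  rw [← Real.log_pow]
  exact Real.log_le_log (by positivity) (mod_cast r.factorial_le_pow)

theorem logFactorialMean_mono : Monotone logFactorialMean := by
  refine monotone_nat_of_le_succ fun r => ?_
  rcases r.eq_zero_or_pos with rfl | hr
  · simp [logFactorialMean]
  · have hr' : (0 : ℝ) < r := Nat.cast_pos.2 hr
    have hlog : r * Real.log r ≤ r * Real.log (r + 1) := by gcongr; linarith
    rw [logFactorialMean, logFactorialMean, log_factorial_succ,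
      div_le_div_iff₀ hr' (by positivity)]
    push_cast
    linarith [log_factorial_le_mul_log r]

theorem sum_logFactorialMean_card_erase {β : Type*} [DecidableEq β] {R T : Finset β} {b : β}
    (hb : b ∈ R) (hRT : R ⊆ T) :
    ∑ c ∈ T.erase b, logFactorialMean #(R.erase c) =
      #T * logFactorialMean #R - Real.log #R := by
  have hsplit : T.erase b = R.erase b ∪ T \ R := by grind
  have hdisj : Disjoint (R.erase b) (T \ R) := disjoint_sdiff.mono_left (erase_subset b R)
  have hin : ∑ c ∈ R.erase b, logFactorialMean #(R.erase c) =
      Real.log (#R).factorial - Real.log #R := by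
    obtain ⟨r, hr⟩ := Nat.exists_eq_add_one_of_ne_zero (card_ne_zero_of_mem hb)
    rw [sum_congr rfl fun c hc => by rw [card_erase_of_mem (mem_of_mem_erase hc)], sum_const,
      card_erase_of_mem hb, nsmul_eq_mul, hr, Nat.add_sub_cancel, mul_logFactorialMean,
      log_factorial_succ]
    push_cast
    ring
  have hout : ∑ c ∈ T \ R, logFactorialMean #(R.erase c) =
      #T * logFactorialMean #R - Real.log (#R).factorial := by
    rw [sum_congr rfl fun c hc => by rw [erase_eq_of_notMem (mem_sdiff.1 hc).2], sum_const,
      nsmul_eq_mul, cast_card_sdiff hRT, sub_mul, mul_logFactorialMean]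
  rw [hsplit, sum_union hdisj, hin, hout]
  ring

/-- With `x` uniformly distributed on `S`, this bounds the entropy of `g x` by `log #(g '' S)`. -/
theorem card_mul_log_card_le {ι κ : Type*} [DecidableEq κ] (S : Finset ι) (g : ι → κ) :
    #S * Real.log #S ≤
      #S * Real.log #(S.image g) + ∑ x ∈ S, Real.log #{y ∈ S | g y = g x} := by
  rcases S.eq_empty_or_nonempty with rfl | hS
  · simp
  have hcardS : (0 : ℝ) < #S := by exact_mod_cast hS.card_pos
  have hcardImage : (0 : ℝ) < #(S.image g) := by exact_mod_cast (hS.image g).card_pos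
  have hcardFiber : ∀ x ∈ S, (0 : ℝ) < #{y ∈ S | g y = g x} := fun x hx =>
    Nat.cast_pos.2 (card_pos.2 ⟨x, mem_filter.2 ⟨hx, rfl⟩⟩)
  have hinv : ∑ x ∈ S, (#{y ∈ S | g y = g x} : ℝ)⁻¹ = #(S.image g) := by
    rw [cast_card, sum_image' (fun x => (#{y ∈ S | g y = g x} : ℝ)⁻¹)]
    intro x hx
    rw [sum_congr rfl fun y hy => by rw [(mem_filter.1 hy).2], sum_const, nsmul_eq_mul,
      mul_inv_cancel₀ (hcardFiber x hx).ne']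
  have hpoint : ∀ x ∈ S, Real.log #S - Real.log #(S.image g) - Real.log #{y ∈ S | g y = g x} ≤
      #S / #(S.image g) * (#{y ∈ S | g y = g x} : ℝ)⁻¹ - 1 := fun x hx => by
    have hfiber := hcardFiber x hx
    rw [← Real.log_div hcardS.ne' hcardImage.ne',
      ← Real.log_div (div_pos hcardS hcardImage).ne' hfiber.ne', ← div_eq_mul_inv]
    exact Real.log_le_sub_one_of_pos (by positivity)
  have hsum := sum_le_sum hpoint
  simp only [sum_sub_distrib, sum_const, nsmul_eq_mul, ← mul_sum, hinv,
    div_mul_cancel₀ _ hcardImage.ne'] at hsum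
  linarith

section Bregman

variable {α β : Type*} [DecidableEq β]

theorem image_apply_subset_map {S : Finset (α ≃ β)} {U : Finset α}
    (hU : ∀ σ ∈ S, ∀ τ ∈ S, Set.EqOn σ τ (↑U)ᶜ) {σ : α ≃ β} (hσ : σ ∈ S) {j : α} (hj : j ∈ U) :
    (S.image fun τ => τ j) ⊆ U.map σ.toEmbedding := by
  intro c hc
  obtain ⟨τ, hτ, rfl⟩ := mem_image.1 hc
  rw [mem_map_equiv]
  by_contra hout
  have hagree : τ (σ.symm (τ j)) = τ j := by
    simpa using hU τ hτ σ hσ (show σ.symm (τ j) ∈ (↑U : Set α)ᶜ from hout)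
  exact hout ((τ.injective hagree).symm ▸ hj)

theorem card_image_apply_filter_le (S : Finset (α ≃ β)) (σ : α ≃ β) {i j : α} (hij : i ≠ j) :
    #({τ ∈ S | τ i = σ i}.image fun τ => τ j) ≤ #((S.image fun τ => τ j).erase (σ i)) := by
  refine card_le_card fun c hc => ?_
  obtain ⟨τ, hτ, rfl⟩ := mem_image.1 hc
  obtain ⟨hτS, hτi⟩ := mem_filter.1 hτ
  exact mem_erase.2 ⟨hτi ▸ τ.injective.ne hij.symm, mem_image_of_mem _ hτS⟩

theorem sum_sum_logFactorialMean_filter_le [DecidableEq α] {S : Finset (α ≃ β)} {U : Finset α}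
    (hU : ∀ σ ∈ S, ∀ τ ∈ S, Set.EqOn σ τ (↑U)ᶜ) {σ : α ≃ β} (hσ : σ ∈ S) :
    ∑ i ∈ U, ∑ j ∈ U.erase i, logFactorialMean #({τ ∈ S | τ i = σ i}.image fun τ => τ j) ≤
      ∑ j ∈ U, (#U * logFactorialMean #(S.image fun τ => τ j) -
        Real.log #(S.image fun τ => τ j)) := by
  rw [sum_comm' (t' := U) (s' := fun j => U.erase j) (by grind)]
  refine sum_le_sum fun j hj => ?_
  calc ∑ i ∈ U.erase j, logFactorialMean #({τ ∈ S | τ i = σ i}.image fun τ => τ j)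
      ≤ ∑ i ∈ U.erase j, logFactorialMean #((S.image fun τ => τ j).erase (σ i)) :=
        sum_le_sum fun i hi =>
          logFactorialMean_mono (card_image_apply_filter_le S σ (ne_of_mem_erase hi))
    _ = ∑ c ∈ (U.map σ.toEmbedding).erase (σ j),
          logFactorialMean #((S.image fun τ => τ j).erase c) := by
        rw [← Equiv.coe_toEmbedding, ← map_erase, sum_map]
    _ = _ := by
        rw [sum_logFactorialMean_card_erase (mem_image_of_mem (fun τ => τ j) hσ)
          (image_apply_subset_map hU hσ hj), card_map]

/-- Brègman's inequality. When `S` consists of the permutations supported on the ones of a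
`0`-`1` matrix, `#S` is the permanent, and the values at `i` lie among the ones of row `i`. -/
theorem log_card_le_sum_logFactorialMean (U : Finset α) (S : Finset (α ≃ β)) (hS : S.Nonempty)
    (hU : ∀ σ ∈ S, ∀ τ ∈ S, Set.EqOn σ τ (↑U)ᶜ) :
    Real.log #S ≤ ∑ i ∈ U, logFactorialMean #(S.image fun σ => σ i) := by
  induction U using Finset.strongInduction generalizing S with
  | H U ih =>
  rcases U.eq_empty_or_nonempty with rfl | hUne
  · have hcard : #S ≤ 1 := card_le_one.2 fun σ hσ τ hτ =>
      Equiv.ext fun i => hU σ hσ τ hτ (by simp)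
    simpa using Real.log_nonpos (Nat.cast_nonneg _) (Nat.cast_le_one.2 hcard)
  have hfiber : ∀ σ ∈ S, ∀ i ∈ U, Real.log #{τ ∈ S | τ i = σ i} ≤
      ∑ j ∈ U.erase i, logFactorialMean #({τ ∈ S | τ i = σ i}.image fun τ => τ j) := by
    refine fun σ hσ i hi => ih _ (erase_ssubset hi) _ ⟨σ, mem_filter.2 ⟨hσ, rfl⟩⟩ ?_
    intro τ hτ ρ hρ a ha
    rw [mem_filter] at hτ hρ
    by_cases hai : a = i
    · rw [hai, hτ.2, hρ.2]
    · exact hU τ hτ.1 ρ hρ.1 fun haU => ha (mem_erase.2 ⟨hai, haU⟩)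
  have hpoint : ∀ σ ∈ S, ∑ i ∈ U, Real.log #{τ ∈ S | τ i = σ i} ≤ _ := fun σ hσ =>
    (sum_le_sum (hfiber σ hσ)).trans (sum_sum_logFactorialMean_filter_le hU hσ)
  have hentropy := sum_le_sum fun i (_ : i ∈ U) => card_mul_log_card_le S fun σ => σ i
  have htotal := sum_le_sum hpoint
  rw [sum_add_distrib, sum_comm, sum_const, nsmul_eq_mul, ← mul_sum] at hentropy
  rw [sum_const, nsmul_eq_mul, sum_sub_distrib, ← mul_sum] at htotal
  have hpos : (0 : ℝ) < #U * #S := by exact_mod_cast Nat.mul_pos hUne.card_pos hS.card_pos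
  refine le_of_mul_le_mul_left ?_ hpos
  linarith

theorem card_le_factorial_rpow {U : Finset α} {S : Finset (α ≃ β)} {d : ℕ}
    (hU : ∀ σ ∈ S, ∀ τ ∈ S, Set.EqOn σ τ (↑U)ᶜ) (hd : ∀ i ∈ U, #(S.image fun σ => σ i) ≤ d) :
    (#S : ℝ) ≤ (d.factorial : ℝ) ^ ((#U : ℝ) / d) := by
  rcases S.eq_empty_or_nonempty with rfl | hS
  · rw [card_empty, Nat.cast_zero]
    positivity
  have hfact : (0 : ℝ) < d.factorial := by positivity
  rw [← Real.log_le_log_iff (mod_cast hS.card_pos) (by positivity), Real.log_rpow hfact]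
  calc Real.log #S ≤ ∑ i ∈ U, logFactorialMean #(S.image fun σ => σ i) :=
        log_card_le_sum_logFactorialMean U S hS hU
    _ ≤ #U • logFactorialMean d :=
        sum_le_card_nsmul _ _ _ fun i hi => logFactorialMean_mono (hd i hi)
    _ = #U / d * Real.log d.factorial := by
        rw [nsmul_eq_mul, logFactorialMean]
        ring

end Bregman

/-- The vertices not reached from `u` have unreached preimages, so `f` permutes them and no edge
leads from them to a reached vertex. -/
theorem exists_iterate_eq_of_exists_iterate_eq_apply {V : Type*} [DecidableEq V] {s : Finset V}
    {f : V → V} {u c : V} (hpre : s.erase u ⊆ s.image f) (hc : c ∈ s)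
    (hreach : ∃ m, f^[m] u = f c) : ∃ m, f^[m] u = c := by
  by_contra hcnot
  let unreached := {y ∈ s | ¬ ∃ m, f^[m] u = y}
  have hsub : unreached ⊆ unreached.image f := by
    intro y hy
    obtain ⟨hys, hynot⟩ := mem_filter.1 hy
    obtain ⟨x, hx, rfl⟩ := mem_image.1 (hpre (mem_erase.2 ⟨fun e => hynot ⟨0, e.symm⟩, hys⟩))
    refine mem_image_of_mem f (mem_filter.2 ⟨hx, ?_⟩)
    rintro ⟨m, rfl⟩
    exact hynot ⟨m + 1, f.iterate_succ_apply' m u⟩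
  have himage : unreached = unreached.image f := eq_of_subset_of_card_le hsub card_image_le
  have hfc : f c ∈ unreached := himage ▸ mem_image_of_mem f (mem_filter.2 ⟨hc, hcnot⟩)
  exact (mem_filter.1 hfc).2 hreach

/-- The pair `(s, f)` encodes a path-cycle of the complete digraph, as in `pathCycleCount`: `s` is
the vertex set and `f` the successor map, extended by the identity off `s`. -/
structure IsPathCycle {V : Type*} (s : Finset V) (f : V → V) : Prop where
  nonempty : s.Nonempty
  apply_of_notMem : ∀ v, v ∉ s → f v = v
  apply_mem : ∀ v ∈ s, f v ∈ s
  connected : ∀ u ∈ s, ∀ v ∈ s,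
    Relation.ReflTransGen (fun a b => (a ∈ s ∧ f a = b) ∨ (b ∈ s ∧ f b = a)) u v
  subsingleton_sources : (↑s \ f '' ↑s : Set V).Subsingleton

namespace IsPathCycle

variable {V : Type*} [DecidableEq V] {s : Finset V} {f : V → V} {u : V}

theorem exists_erase_subset_image (h : IsPathCycle s f) : ∃ u ∈ s, s.erase u ⊆ s.image f := by
  by_cases hsource : ∃ u ∈ s, u ∉ f '' ↑s
  · obtain ⟨u, hu, hunot⟩ := hsource
    refine ⟨u, hu, fun y hy => ?_⟩
    by_contra hynot
    exact ne_of_mem_erase hy <| h.subsingleton_sources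
      ⟨mem_of_mem_erase hy, by simpa using hynot⟩ ⟨hu, hunot⟩
  · obtain ⟨u, hu⟩ := h.nonempty
    refine ⟨u, hu, fun y hy => ?_⟩
    by_contra hynot
    exact hsource ⟨y, mem_of_mem_erase hy, by simpa using hynot⟩

theorem mem_iff_exists_iterate (h : IsPathCycle s f) (hu : u ∈ s)
    (hpre : s.erase u ⊆ s.image f) (y : V) : y ∈ s ↔ ∃ m, f^[m] u = y := by
  refine ⟨fun hy => ?_, ?_⟩
  · induction h.connected u hu y hy with
    | refl => exact ⟨0, rfl⟩
    | tail _ hstep ih =>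
      rcases hstep with ⟨hb, rfl⟩ | ⟨hc, rfl⟩
      · obtain ⟨m, rfl⟩ := ih hb
        exact ⟨m + 1, f.iterate_succ_apply' m u⟩
      · exact exists_iterate_eq_of_exists_iterate_eq_apply hpre hc (ih (h.apply_mem _ hc))
  · rintro ⟨m, rfl⟩
    have hmaps : Set.MapsTo f ↑s ↑s := h.apply_mem
    exact hmaps.iterate m hu

theorem exists_bijective_update [Finite V] (h : IsPathCycle s f) (hu : u ∈ s)
    (hpre : s.erase u ⊆ s.image f) : ∃ v ∈ s, Function.Bijective (Function.update f v u) := by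
  have hsurj : Set.SurjOn f s (s.erase u) := by rwa [Set.SurjOn, ← coe_image, coe_subset]
  obtain ⟨t, -, hinj, himage⟩ := exists_subset_injOn_image_eq_of_surjOn _ _ hsurj
  have hcard : #t < #s := by
    rw [← card_image_of_injOn hinj, himage]
    exact card_erase_lt_of_mem hu
  obtain ⟨v, hv, hvt⟩ := exists_mem_notMem_of_card_lt_card hcard
  refine ⟨v, hv, Finite.surjective_iff_bijective.1 fun y => ?_⟩
  by_cases hys : y ∈ s
  · by_cases hyu : y = u
    · exact ⟨v, by simp [hyu]⟩
    · obtain ⟨x, hx, rfl⟩ := mem_image.1 (himage ▸ mem_erase.2 ⟨hyu, hys⟩)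
      exact ⟨x, Function.update_of_ne (ne_of_mem_of_not_mem hx hvt) _ _⟩
  · exact ⟨y, by rw [Function.update_of_ne (ne_of_mem_of_not_mem hv hys).symm,
      h.apply_of_notMem y hys]⟩

end IsPathCycle

section Digraph

variable {V : Type*} [Fintype V]

/-- The out-neighbours of `v` in the digraph with multiplicity function `G`. -/
def outNeighbors (G : V → V → ℕ) (v : V) : Finset V := {w | G v w ≠ 0}

theorem mem_outNeighbors {G : V → V → ℕ} {v w : V} : w ∈ outNeighbors G v ↔ G v w ≠ 0 := by
  simp [outNeighbors]

theorem card_outNeighbors_le_sum (G : V → V → ℕ) (v : V) : #(outNeighbors G v) ≤ ∑ w, G v w := by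
  rw [outNeighbors, card_filter]
  exact sum_le_sum fun w _ => by split_ifs <;> omega

variable [DecidableEq V]

/-- The permutations sending `v` to `u` and every other vertex to itself or to an out-neighbour.
They include the closures by an edge `(v, u)` of the paths from `u` to `v`. -/
def pathClosures (G : V → V → ℕ) (u v : V) : Finset (Equiv.Perm V) :=
  {σ | σ v = u ∧ ∀ i ≠ v, σ i ∈ insert i (outNeighbors G i)}

/-- The path-cycle, as a vertex set and a successor map, with first vertex `u` that arises from
the permutation `σ` when the edge leaving `v` is redirected to `w`. -/
noncomputable def pathCycleOfPerm (u v w : V) (σ : Equiv.Perm V) : Finset V × (V → V) :=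
  (univ.filter fun y => ∃ m, (Function.update σ v w)^[m] u = y, Function.update σ v w)

/-- The path-cycle subgraphs of the simple digraph underlying `G`. -/
noncomputable def pathCycles (G : V → V → ℕ) : Finset (Finset V × (V → V)) :=
  {p | IsPathCycle p.1 p.2 ∧ ∀ v ∈ p.1, p.2 v ∈ outNeighbors G v}

variable {G : V → V → ℕ}

theorem mem_pathClosures {u v : V} {σ : Equiv.Perm V} :
    σ ∈ pathClosures G u v ↔ σ v = u ∧ ∀ i ≠ v, σ i ∈ insert i (outNeighbors G i) := by
  simp [pathClosures]

theorem mem_pathCycles {s : Finset V} {f : V → V} :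
    (s, f) ∈ pathCycles G ↔ IsPathCycle s f ∧ ∀ v ∈ s, f v ∈ outNeighbors G v := by
  simp [pathCycles]

theorem pathCycleCount_le_card_pathCycles (hsimple : ∀ u v, G u v ≤ 1) :
    pathCycleCount G ≤ #(pathCycles G) := by
  rw [pathCycleCount, ← Fintype.sum_prod_type', pathCycles, card_filter]
  refine sum_le_sum fun ⟨s, f⟩ _ => ?_
  split_ifs with hcycle hmem hmem
  · exact prod_le_one' fun v _ => hsimple _ _
  · obtain ⟨hne, hoff, hmaps, hconn, hsources⟩ := hcycle
    have hpath : IsPathCycle s f := by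
      refine ⟨hne, hoff, hmaps, hconn, fun a ha b hb => card_le_one.1 hsources a ?_ b ?_⟩
      · simpa using ha
      · simpa using hb
    obtain ⟨v, hv, hzero⟩ : ∃ v ∈ s, G v (f v) = 0 := by
      simpa [hpath, mem_outNeighbors] using hmem
    exact (prod_eq_zero hv hzero).le
  · exact Nat.zero_le _
  · exact le_rfl

theorem exists_pathCycleOfPerm_eq {s : Finset V} {f : V → V} (h : (s, f) ∈ pathCycles G) :
    ∃ u v, ∃ w ∈ outNeighbors G v, ∃ σ ∈ pathClosures G u v, pathCycleOfPerm u v w σ = (s, f) := by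
  obtain ⟨hpath, hedge⟩ := mem_pathCycles.1 h
  obtain ⟨u, hu, hpre⟩ := hpath.exists_erase_subset_image
  obtain ⟨v, hv, hbij⟩ := hpath.exists_bijective_update hu hpre
  refine ⟨u, v, f v, hedge v hv, Equiv.ofBijective _ hbij, mem_pathClosures.2 ⟨by simp, ?_⟩, ?_⟩
  · intro i hi
    rw [Equiv.ofBijective_apply, Function.update_of_ne hi, mem_insert]
    by_cases his : i ∈ s
    · exact Or.inr (hedge i his)
    · exact Or.inl (hpath.apply_of_notMem i his)
  · have hupdate : Function.update (Equiv.ofBijective _ hbij) v (f v) = f := by simp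
    rw [pathCycleOfPerm, hupdate]
    congr 1
    ext y
    simp [hpath.mem_iff_exists_iterate hu hpre]

theorem card_pathCycles_le_sum :
    #(pathCycles G) ≤ ∑ p : V × V, #(outNeighbors G p.2) * #(pathClosures G p.1 p.2) := by
  have hcover : pathCycles G ⊆ univ.biUnion fun p : V × V =>
      image₂ (pathCycleOfPerm p.1 p.2) (outNeighbors G p.2) (pathClosures G p.1 p.2) := by
    rintro ⟨s, f⟩ h
    obtain ⟨u, v, w, hw, σ, hσ, hdecode⟩ := exists_pathCycleOfPerm_eq h
    exact mem_biUnion.2 ⟨(u, v), mem_univ _, mem_image₂.2 ⟨w, hw, σ, hσ, hdecode⟩⟩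
  exact (card_le_card hcover).trans
    (card_biUnion_le.trans (sum_le_sum fun p _ => card_image₂_le _ _ _))

theorem card_pathClosures_le {k : ℕ} (hdeg : ∀ v, #(outNeighbors G v) ≤ k) (u v : V) :
    (#(pathClosures G u v) : ℝ) ≤
      ((k + 1).factorial : ℝ) ^ (((Fintype.card V : ℝ) - 1) / ((k : ℝ) + 1)) := by
  have hagree : ∀ σ ∈ pathClosures G u v, ∀ τ ∈ pathClosures G u v,
      Set.EqOn σ τ (↑(univ.erase v))ᶜ := by
    intro σ hσ τ hτ i hi
    obtain rfl : i = v := by simpa using hi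
    rw [(mem_pathClosures.1 hσ).1, (mem_pathClosures.1 hτ).1]
  have hvalues : ∀ i ∈ univ.erase v, #((pathClosures G u v).image fun σ => σ i) ≤ k + 1 := by
    intro i hi
    have hsub : ((pathClosures G u v).image fun σ => σ i) ⊆ insert i (outNeighbors G i) :=
      image_subset_iff.2 fun σ hσ => (mem_pathClosures.1 hσ).2 i (ne_of_mem_erase hi)
    exact (card_le_card hsub).trans ((card_insert_le _ _).trans (Nat.succ_le_succ (hdeg i)))
  have hbound := card_le_factorial_rpow hagree hvalues
  rwa [cast_card_erase_of_mem (mem_univ v), card_univ, Nat.cast_add_one] at hbound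

end Digraph

theorem stmt_7_general {V : Type*} [Fintype V] [DecidableEq V] (k : ℕ) (G : V → V → ℕ)
    (hsimple : ∀ u v, G u v ≤ 1) (hdeg : ∀ v, ∑ u, G v u ≤ k) :
    (pathCycleCount G : ℝ) ≤
      (Fintype.card V : ℝ) ^ 2 * (k : ℝ) *
        ((k + 1).factorial : ℝ) ^ (((Fintype.card V : ℝ) - 1) / ((k : ℝ) + 1)) := by
  set B := ((k + 1).factorial : ℝ) ^ (((Fintype.card V : ℝ) - 1) / ((k : ℝ) + 1))
  have hout : ∀ v, #(outNeighbors G v) ≤ k := fun v => (card_outNeighbors_le_sum G v).trans (hdeg v)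
  have hcount : pathCycleCount G ≤
      ∑ p : V × V, #(outNeighbors G p.2) * #(pathClosures G p.1 p.2) :=
    (pathCycleCount_le_card_pathCycles hsimple).trans card_pathCycles_le_sum
  calc (pathCycleCount G : ℝ)
      ≤ ∑ p : V × V, (#(outNeighbors G p.2) : ℝ) * #(pathClosures G p.1 p.2) := mod_cast hcount
    _ ≤ ∑ _p : V × V, k * B := by
        gcongr with p
        · exact hout p.2
        · exact card_pathClosures_le hout p.1 p.2
    _ = (Fintype.card V : ℝ) ^ 2 * k * B := by
        rw [sum_const, card_univ, Fintype.card_prod, nsmul_eq_mul]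
        push_cast
        ring

theorem stmt_7 (n k : ℕ) (hn : 1 ≤ n) (hk : 2 ≤ k) (G : Fin n → Fin n → ℕ)
    (hsimple : ∀ u v : Fin n, G u v ≤ 1)
    (hdeg : ∀ v : Fin n, (∑ u, G v u) ≤ k) :
    (pathCycleCount G : ℝ) ≤
      (n : ℝ) ^ 2 * (k : ℝ) *
        (Nat.factorial (k + 1) : ℝ) ^ (((n : ℝ) - 1) / ((k : ℝ) + 1)) := by
  simpa only [Fintype.card_fin] using stmt_7_general k G hsimple hdeg
end

section
/- For all integers n ≥ 1 and k ≥ 2, every digraph G with n vertices, every vertex of outdegree exactly k, and every multi-edge between distinct vertices of multiplicity at most k−1 satisfies C'(G) ≤ 5·n²·k·α(k)^(n−1), where C'(G) is the number of path-cycle subgraphs of G and α(k) = (k − 1 + √((k−1)² + 4))/2. -/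
open scoped Classical
open Finset

/-!
A path-cycle is a simple path from `u` to `v` closed by an edge out of `v`, so it suffices to
bound the number of simple paths between two given vertices by a constant times `α ^ (n - 1)`.
Each such path leaves a vertex at most once and never uses a loop. The number is therefore affine
in the multiplicities of the edges out of each single vertex, and it is largest when every vertex
has exactly one edge of multiplicity `h = k - 1` and one of multiplicity `1`, to distinct
vertices.

For these digraphs one shows by induction on the number `m` of vertices other than the end that
there are at most `c * α ^ m` simple paths, and at most `α ^ m` if some edge is useless, meaning
that it is a loop, leads back to the start, or leaves the vertex set. There are `2 * m` edges, and
`m` possible targets of useful ones. Hence either some target has at most one useful incoming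
edge, which can be contracted, and the relation `α ^ 2 = h * α + 1` closes the induction; or every
edge is useful and the end has exactly two incoming edges, from `p` and `r` say. In that case one
splits the paths according to their last edge: a path ending at `p` can no longer use the edge
from `r` to the former end, and this useless edge pays for the factor `c`.
-/

section EraseInduction

variable {V : Type*} [DecidableEq V]

@[elab_as_elim]
theorem erase_induction {motive : Finset V → V → Prop}
    (notMem : ∀ S u, u ∉ S → motive S u)
    (mem : ∀ S u, u ∈ S → (∀ t, motive (S.erase u) t) → motive S u) (S : Finset V) (u : V) :
    motive S u := by
  induction S using Finset.strongInduction generalizing u with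
  | H S ih =>
    by_cases hu : u ∈ S
    · exact mem S u hu (ih _ (erase_ssubset hu))
    · exact notMem S u hu

end EraseInduction

section PathSum

variable {V R : Type*} [Fintype V] [DecidableEq V] [CommSemiring R]

/-- The weighted number of simple paths from `u` to `v` all of whose vertices other than `v` lie in
`S`; a path weighs the product of the weights `W` of its edges. -/
def pathSum (W : V → V → R) (v : V) (S : Finset V) (u : V) : R :=
  if u = v then 1
  else if _h : u ∈ S then ∑ t, W u t * pathSum W v (S.erase u) t
  else 0
termination_by S.card
decreasing_by exact card_erase_lt_of_mem ‹_›

/-- The weighted number of simple paths from `u` to `v` in `S` that traverse an edge `(x, t)`, the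
weight of that edge being left out. It is the coefficient of `W x t` in `pathSum W v S u`. -/
def pathSumVia (W : V → V → R) (v x t : V) (S : Finset V) (u : V) : R :=
  if u = v then 0
  else if _h : u ∈ S then
    if u = x then pathSum W v (S.erase u) t
    else ∑ s, W u s * pathSumVia W v x t (S.erase u) s
  else 0
termination_by S.card
decreasing_by exact card_erase_lt_of_mem ‹_›

variable {W W' : V → V → R} {v x t u p : V} {S : Finset V}

section Recursion

variable (W v x t S)

@[simp]
theorem pathSum_sink : pathSum W v S v = 1 := by
  rw [pathSum, if_pos rfl]

@[simp]
theorem pathSumVia_sink : pathSumVia W v x t S v = 0 := by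
  rw [pathSumVia, if_pos rfl]

end Recursion

theorem pathSum_of_notMem (huv : u ≠ v) (hu : u ∉ S) : pathSum W v S u = 0 := by
  rw [pathSum, if_neg huv, dif_neg hu]

theorem pathSum_of_mem (huv : u ≠ v) (hu : u ∈ S) :
    pathSum W v S u = ∑ t, W u t * pathSum W v (S.erase u) t := by
  rw [pathSum, if_neg huv, dif_pos hu]

theorem pathSumVia_of_notMem (hu : u ∉ S) : pathSumVia W v x t S u = 0 := by
  rw [pathSumVia, dif_neg hu, ite_self]

theorem pathSumVia_start (hxv : x ≠ v) (hx : x ∈ S) :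
    pathSumVia W v x t S x = pathSum W v (S.erase x) t := by
  rw [pathSumVia, if_neg hxv, dif_pos hx, if_pos rfl]

theorem pathSumVia_of_mem (huv : u ≠ v) (hu : u ∈ S) (hux : u ≠ x) :
    pathSumVia W v x t S u = ∑ s, W u s * pathSumVia W v x t (S.erase u) s := by
  rw [pathSumVia, if_neg huv, dif_pos hu, if_neg hux]

theorem map_pathSum {R' : Type*} [CommSemiring R'] (f : R →+* R') (W : V → V → R) (v : V)
    (S : Finset V) (u : V) : f (pathSum W v S u) = pathSum (fun r t => f (W r t)) v S u := by
  induction S, u using erase_induction with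
  | notMem S u hu =>
    rcases eq_or_ne u v with rfl | huv
    · simp only [pathSum_sink, map_one]
    · simp only [pathSum_of_notMem huv hu, map_zero]
  | mem S u hu ih =>
    rcases eq_or_ne u v with rfl | huv
    · simp only [pathSum_sink, map_one]
    · simp only [pathSum_of_mem huv hu, map_sum, map_mul, ih]

theorem pathSum_congr (h : ∀ r ∈ S, W r = W' r) (u : V) :
    pathSum W v S u = pathSum W' v S u := by
  induction S, u using erase_induction with
  | notMem S u hu =>
    rcases eq_or_ne u v with rfl | huv
    · simp only [pathSum_sink]
    · simp only [pathSum_of_notMem huv hu]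
  | mem S u hu ih =>
    rcases eq_or_ne u v with rfl | huv
    · simp only [pathSum_sink]
    · simp only [pathSum_of_mem huv hu, h u hu, ih _ fun r hr => h r (mem_of_mem_erase hr)]

theorem pathSumVia_congr (h : ∀ r ∈ S, r ≠ x → W r = W' r) (u : V) :
    pathSumVia W v x t S u = pathSumVia W' v x t S u := by
  induction S, u using erase_induction with
  | notMem S u hu => simp only [pathSumVia_of_notMem hu]
  | mem S u hu ih =>
    rcases eq_or_ne u v with rfl | huv
    · simp only [pathSumVia_sink]
    rcases eq_or_ne u x with rfl | hux
    · simp only [pathSumVia_start huv hu]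
      exact pathSum_congr (fun r hr => h r (mem_of_mem_erase hr) (ne_of_mem_erase hr)) t
    · simp only [pathSumVia_of_mem huv hu hux, h u hu hux,
        ih _ fun r hr => h r (mem_of_mem_erase hr)]

/-- A simple path leaves `x` at most once, so path sums are affine in each row of the weights. -/
theorem pathSum_eq_erase_add_sum_via (W : V → V → R) (hxv : x ≠ v) (S : Finset V) (u : V) :
    pathSum W v S u = pathSum W v (S.erase x) u + ∑ t, W x t * pathSumVia W v x t S u := by
  induction S, u using erase_induction with
  | notMem S u hu =>
    rcases eq_or_ne u v with rfl | huv
    · simp only [pathSum_sink, pathSumVia_sink, mul_zero, sum_const_zero, add_zero]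
    · simp only [pathSum_of_notMem huv hu, pathSum_of_notMem huv (mt mem_of_mem_erase hu),
        pathSumVia_of_notMem hu, mul_zero, sum_const_zero, add_zero]
  | mem S u hu ih =>
    rcases eq_or_ne u v with rfl | huv
    · simp only [pathSum_sink, pathSumVia_sink, mul_zero, sum_const_zero, add_zero]
    rcases eq_or_ne u x with rfl | hux
    · simp only [pathSum_of_notMem huv (notMem_erase u S), pathSum_of_mem huv hu, zero_add,
        pathSumVia_start huv hu]
    simp only [pathSum_of_mem huv hu, pathSum_of_mem huv (mem_erase.2 ⟨hux, hu⟩),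
      pathSumVia_of_mem huv hu hux, ih, erase_right_comm (a := x), mul_add, sum_add_distrib,
      mul_sum]
    rw [sum_comm (s := univ (α := V)) (f := fun s t => W u s * (W x t * _))]
    simp only [mul_left_comm]

theorem pathSum_update (W : V → V → R) (hxv : x ≠ v) (w : V → R) (S : Finset V) (u : V) :
    pathSum (Function.update W x w) v S u =
      pathSum W v (S.erase x) u + ∑ t, w t * pathSumVia W v x t S u := by
  have hrow : ∀ r, r ≠ x → Function.update W x w r = W r := fun r hr =>
    Function.update_of_ne hr _ _
  rw [pathSum_eq_erase_add_sum_via _ hxv, Function.update_self,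
    pathSum_congr fun r hr => hrow r (ne_of_mem_erase hr)]
  simp only [pathSumVia_congr fun r _ hr => hrow r hr]

theorem pathSumVia_target_notMem (htv : t ≠ v) (ht : t ∉ S) (u : V) :
    pathSumVia W v x t S u = 0 := by
  induction S, u using erase_induction with
  | notMem S u hu => exact pathSumVia_of_notMem hu
  | mem S u hu ih =>
    rcases eq_or_ne u v with rfl | huv
    · exact pathSumVia_sink ..
    have ht' : t ∉ S.erase u := mt mem_of_mem_erase ht
    rcases eq_or_ne u x with rfl | hux
    · rw [pathSumVia_start huv hu, pathSum_of_notMem htv ht']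
    · simp only [pathSumVia_of_mem huv hu hux, ih _ ht', mul_zero, sum_const_zero]

theorem pathSumVia_target_start (W : V → V → R) (v x t : V) (S : Finset V) :
    pathSumVia W v x t S t = 0 := by
  by_cases ht : t ∈ S
  swap
  · exact pathSumVia_of_notMem ht
  rcases eq_or_ne t v with rfl | htv
  · exact pathSumVia_sink ..
  rcases eq_or_ne t x with rfl | htx
  · rw [pathSumVia_start htv ht, pathSum_of_notMem htv (notMem_erase t S)]
  · simp only [pathSumVia_of_mem htv ht htx, pathSumVia_target_notMem htv (notMem_erase t S),
      mul_zero, sum_const_zero]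

theorem pathSumVia_loop (W : V → V → R) (hxv : x ≠ v) (S : Finset V) (u : V) :
    pathSumVia W v x x S u = 0 := by
  induction S, u using erase_induction with
  | notMem S u hu => exact pathSumVia_of_notMem hu
  | mem S u hu ih =>
    rcases eq_or_ne u x with rfl | hux
    · exact pathSumVia_target_start ..
    rcases eq_or_ne u v with rfl | huv
    · exact pathSumVia_sink ..
    · simp only [pathSumVia_of_mem huv hu hux, ih, mul_zero, sum_const_zero]

theorem pathSumVia_eq_sum_next (W : V → V → R) (htx : t ≠ x) (htv : t ≠ v) (ht : t ∈ S) (u : V) :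
    pathSumVia W v x t S u = ∑ s, W t s * pathSumVia W v x s (S.erase t) u := by
  induction S, u using erase_induction with
  | notMem S u hu =>
    simp only [pathSumVia_of_notMem hu, pathSumVia_of_notMem (mt mem_of_mem_erase hu), mul_zero,
      sum_const_zero]
  | mem S u hu ih =>
    rcases eq_or_ne u v with rfl | huv
    · simp only [pathSumVia_sink, mul_zero, sum_const_zero]
    rcases eq_or_ne u t with rfl | hut
    · simp only [pathSumVia_target_start, pathSumVia_of_notMem (notMem_erase u S), mul_zero,
        sum_const_zero]
    have hu' : u ∈ S.erase t := mem_erase.2 ⟨hut, hu⟩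
    rcases eq_or_ne u x with rfl | hux
    · simp only [pathSumVia_start huv hu, pathSumVia_start huv hu',
        pathSum_of_mem htv (mem_erase.2 ⟨htx, ht⟩), erase_right_comm (a := u)]
    · simp only [pathSumVia_of_mem huv hu hux, pathSumVia_of_mem huv hu' hux,
        ih _ (mem_erase.2 ⟨hut.symm, ht⟩), mul_sum, erase_right_comm (a := u)]
      rw [sum_comm]
      simp only [mul_left_comm]

theorem pathSumVia_target_sink (W : V → V → R) (hxv : x ≠ v) (hv : v ∉ S) (hx : x ∈ S) (u : V) :
    pathSumVia W v x v S u = pathSum W x (S.erase x) u := by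
  induction S, u using erase_induction with
  | notMem S u hu =>
    rw [pathSumVia_of_notMem hu,
      pathSum_of_notMem (ne_of_mem_of_not_mem hx hu).symm (mt mem_of_mem_erase hu)]
  | mem S u hu ih =>
    have huv := ne_of_mem_of_not_mem hu hv
    rcases eq_or_ne u x with rfl | hux
    · simp only [pathSumVia_start huv hu, pathSum_sink]
    · simp only [pathSumVia_of_mem huv hu hux, pathSum_of_mem hux (mem_erase.2 ⟨hux, hu⟩),
        ih _ (mt mem_of_mem_erase hv) (mem_erase.2 ⟨hux.symm, hx⟩), erase_right_comm (a := u)]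

theorem pathSum_eq_sum_last_edge (W : V → V → R) (huv : u ≠ v) (hv : v ∉ S) :
    pathSum W v S u = ∑ r ∈ S, W r v * pathSum W r (S.erase r) u := by
  induction S, u using erase_induction with
  | notMem S u hu =>
    rw [pathSum_of_notMem huv hu, sum_eq_zero fun r hr => ?_]
    rw [pathSum_of_notMem (ne_of_mem_of_not_mem hr hu).symm (mt mem_of_mem_erase hu), mul_zero]
  | mem S u hu ih =>
    have hfirst : ∀ r ∈ S.erase u, W r v * pathSum W r (S.erase r) u =
        ∑ t ∈ univ.erase v, W u t * (W r v * pathSum W r ((S.erase u).erase r) t) := by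
      intro r hr
      have hru := (ne_of_mem_erase hr).symm
      have hrv := (ne_of_mem_of_not_mem (mem_of_mem_erase hr) hv).symm
      rw [pathSum_of_mem hru (mem_erase.2 ⟨hru, hu⟩), ← add_sum_erase univ _ (mem_univ v),
        pathSum_of_notMem hrv (mt (mem_of_mem_erase ∘ mem_of_mem_erase) hv), mul_zero, zero_add,
        mul_sum, erase_right_comm]
      simp only [mul_left_comm]
    rw [← add_sum_erase S _ hu, pathSum_sink, pathSum_of_mem huv hu,
      ← add_sum_erase univ _ (mem_univ v), pathSum_sink, sum_congr rfl hfirst, sum_comm]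
    refine congrArg _ (sum_congr rfl fun t ht => ?_)
    rw [ih t (ne_of_mem_erase ht) (mt mem_of_mem_erase hv), mul_sum]

theorem pathSum_eq_zero_of_no_in (huv : u ≠ v) (hv : v ∉ S) (h : ∀ r ∈ S, W r v = 0) :
    pathSum W v S u = 0 := by
  rw [pathSum_eq_sum_last_edge W huv hv]
  exact sum_eq_zero fun r hr => by rw [h r hr, zero_mul]

theorem pathSum_erase_of_no_in (hup : u ≠ p) (h : ∀ r ∈ S, r ≠ p → W r p = 0) :
    pathSum W v (S.erase p) u = pathSum W v S u := by
  induction S, u using erase_induction with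
  | notMem S u hu =>
    rcases eq_or_ne u v with rfl | huv
    · simp only [pathSum_sink]
    · rw [pathSum_of_notMem huv hu, pathSum_of_notMem huv (mt mem_of_mem_erase hu)]
  | mem S u hu ih =>
    rcases eq_or_ne u v with rfl | huv
    · simp only [pathSum_sink]
    rw [pathSum_of_mem huv hu, pathSum_of_mem huv (mem_erase.2 ⟨hup, hu⟩)]
    refine sum_congr rfl fun t _ => ?_
    rcases eq_or_ne t p with rfl | htp
    · rw [h u hu hup, zero_mul, zero_mul]
    · rw [erase_right_comm, ih t htp fun r hr => h r (mem_of_mem_erase hr)]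

theorem pathSumVia_erase_of_no_in (hup : u ≠ p) (htp : t ≠ p)
    (h : ∀ r ∈ S, r ≠ x → r ≠ p → W r p = 0) :
    pathSumVia W v x t (S.erase p) u = pathSumVia W v x t S u := by
  induction S, u using erase_induction with
  | notMem S u hu =>
    rw [pathSumVia_of_notMem hu, pathSumVia_of_notMem (mt mem_of_mem_erase hu)]
  | mem S u hu ih =>
    rcases eq_or_ne u v with rfl | huv
    · simp only [pathSumVia_sink]
    have hu' : u ∈ S.erase p := mem_erase.2 ⟨hup, hu⟩
    rcases eq_or_ne u x with rfl | hux
    · rw [pathSumVia_start huv hu, pathSumVia_start huv hu', erase_right_comm]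
      exact pathSum_erase_of_no_in htp fun r hr => h r (mem_of_mem_erase hr) (ne_of_mem_erase hr)
    rw [pathSumVia_of_mem huv hu hux, pathSumVia_of_mem huv hu' hux]
    refine sum_congr rfl fun s _ => ?_
    rcases eq_or_ne s p with rfl | hsp
    · rw [h u hu hux hup, zero_mul, zero_mul]
    · rw [erase_right_comm, ih s hsp fun r hr => h r (mem_of_mem_erase hr)]

/-- The left-hand side is the path sum of the contraction of `(x, t)`: the vertex `t` is deleted and
`x` inherits its outgoing edges. -/
theorem pathSum_contract (W : V → V → R) (hxv : x ≠ v) (htx : t ≠ x) (htv : t ≠ v) (ht : t ∈ S)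
    (u : V) : pathSum (Function.update W x (W t)) v (S.erase t) u =
      pathSum W v ((S.erase x).erase t) u + pathSumVia W v x t S u := by
  rw [pathSum_update W hxv, ← pathSumVia_eq_sum_next W htx htv ht, erase_right_comm]

section Order

variable [PartialOrder R] [IsOrderedRing R]

theorem pathSum_nonneg (hW : ∀ r t, 0 ≤ W r t) (v : V) (S : Finset V) (u : V) :
    0 ≤ pathSum W v S u := by
  induction S, u using erase_induction with
  | notMem S u hu =>
    rcases eq_or_ne u v with rfl | huv
    · rw [pathSum_sink]; exact zero_le_one
    · rw [pathSum_of_notMem huv hu]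
  | mem S u hu ih =>
    rcases eq_or_ne u v with rfl | huv
    · rw [pathSum_sink]; exact zero_le_one
    · rw [pathSum_of_mem huv hu]
      exact sum_nonneg fun t _ => mul_nonneg (hW u t) (ih t)

theorem pathSumVia_nonneg (hW : ∀ r t, 0 ≤ W r t) (v x t : V) (S : Finset V) (u : V) :
    0 ≤ pathSumVia W v x t S u := by
  induction S, u using erase_induction with
  | notMem S u hu => rw [pathSumVia_of_notMem hu]
  | mem S u hu ih =>
    rcases eq_or_ne u v with rfl | huv
    · rw [pathSumVia_sink]
    rcases eq_or_ne u x with rfl | hux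
    · rw [pathSumVia_start huv hu]
      exact pathSum_nonneg hW v _ t
    · rw [pathSumVia_of_mem huv hu hux]
      exact sum_nonneg fun s _ => mul_nonneg (hW u s) (ih s)

end Order

end PathSum

section TwoEdgeRow

/-- The multiplicity of an edge of a two-edge digraph: `h` for heavy edges (`true`) and `1` for
light edges (`false`). -/
def edgeWeight (h : ℝ) (ε : Bool) : ℝ := cond ε h 1

theorem edgeWeight_nonneg {h : ℝ} (hh : 0 ≤ h) (ε : Bool) : 0 ≤ edgeWeight h ε := by
  cases ε
  exacts [zero_le_one, hh]

theorem one_le_edgeWeight {h : ℝ} (hh : 1 ≤ h) (ε : Bool) : 1 ≤ edgeWeight h ε := by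
  cases ε
  exacts [le_rfl, hh]

theorem edgeWeight_le {h : ℝ} (hh : 1 ≤ h) (ε : Bool) : edgeWeight h ε ≤ h := by
  cases ε
  exacts [hh, le_rfl]

variable {V : Type*} [DecidableEq V]

/-- The weights of the edges leaving a vertex that has a heavy edge to `ρ true` and a light edge to
`ρ false`. -/
def twoEdgeRow (h : ℝ) (ρ : Bool → V) (t : V) : ℝ :=
  ∑ ε, if ρ ε = t then edgeWeight h ε else 0

theorem twoEdgeRow_nonneg {h : ℝ} (hh : 0 ≤ h) (ρ : Bool → V) (t : V) : 0 ≤ twoEdgeRow h ρ t :=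
  sum_nonneg fun ε _ => ite_nonneg (edgeWeight_nonneg hh ε) le_rfl

theorem twoEdgeRow_eq_zero (h : ℝ) {ρ : Bool → V} {t : V} (hρ : ∀ ε, ρ ε ≠ t) :
    twoEdgeRow h ρ t = 0 :=
  sum_eq_zero fun ε _ => if_neg (hρ ε)

theorem twoEdgeRow_apply (h : ℝ) {ρ : Bool → V} (hρ : Function.Injective ρ) (ε : Bool) :
    twoEdgeRow h ρ (ρ ε) = edgeWeight h ε := by
  simp only [twoEdgeRow, hρ.eq_iff, sum_ite_eq', mem_univ, if_true]

theorem sum_twoEdgeRow_mul [Fintype V] (h : ℝ) (ρ : Bool → V) (f : V → ℝ) (ε : Bool) :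
    ∑ t, twoEdgeRow h ρ t * f t =
      edgeWeight h ε * f (ρ ε) + edgeWeight h (!ε) * f (ρ (!ε)) := by
  simp only [twoEdgeRow, Fintype.sum_bool, add_mul, ite_mul, zero_mul, sum_add_distrib,
    sum_ite_eq, mem_univ, if_true]
  cases ε
  exacts [add_comm _ _, rfl]

end TwoEdgeRow

/-- A digraph in which every vertex `r` has a heavy edge to `edge r true` and a light edge to
`edge r false`, together with the end point `sink` and the set `inner` of the other admissible
vertices of the paths to be counted. The edges of vertices outside `inner` are irrelevant. -/
structure TwoEdgeDigraph (V : Type*) where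
  edge : V → Bool → V
  sink : V
  inner : Finset V

namespace TwoEdgeDigraph

variable {V : Type*} {D : TwoEdgeDigraph V} {h : ℝ} {u x t r p : V} {ε : Bool}

/-- The sink is not an inner vertex, and the two edges of an inner vertex are not parallel. -/
structure Admissible (D : TwoEdgeDigraph V) : Prop where
  sink_notMem : D.sink ∉ D.inner
  injective : ∀ r ∈ D.inner, Function.Injective (D.edge r)

theorem Admissible.edge_not_ne (hD : D.Admissible) (hr : r ∈ D.inner) (ε : Bool) :
    D.edge r (!ε) ≠ D.edge r ε :=
  (hD.injective r hr).ne (Bool.not_ne_self ε)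

variable [DecidableEq V]

section Operations

variable (D) (h)

/-- The edge multiplicities of a two-edge digraph. -/
def weight (r : V) : V → ℝ := twoEdgeRow h (D.edge r)

/-- Deletion of the vertex `p`. -/
def erase (p : V) : TwoEdgeDigraph V := { D with inner := D.inner.erase p }

/-- The digraph in which paths have to end at the inner vertex `x` instead. -/
def withSink (x : V) : TwoEdgeDigraph V := { D with sink := x, inner := D.inner.erase x }

/-- Replacement of the edges leaving `x`. -/
def redirect (x : V) (ρ : Bool → V) : TwoEdgeDigraph V :=
  { D with edge := Function.update D.edge x ρ }

/-- Contraction of an edge `(x, t)`, where `x` keeps only that edge: if `t` is the sink then `x`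
becomes the sink, and otherwise `t` is deleted and `x` inherits its edges. -/
def contract (x t : V) : TwoEdgeDigraph V :=
  if t = D.sink then D.withSink x else (D.redirect x (D.edge t)).erase t

/-- The weighted number of simple paths from `u` to the sink. -/
def paths [Fintype V] (u : V) : ℝ := pathSum (D.weight h) D.sink D.inner u

/-- The weighted number of simple paths from `u` to the sink through an edge `(x, t)`, whose own
weight is left out. -/
def pathsVia [Fintype V] (x t u : V) : ℝ := pathSumVia (D.weight h) D.sink x t D.inner u

theorem weight_nonneg {h : ℝ} (hh : 0 ≤ h) (r t : V) : 0 ≤ D.weight h r t :=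
  twoEdgeRow_nonneg hh _ _

variable (x)

theorem contract_sink : D.contract x D.sink = D.withSink x := if_pos rfl

variable {D}

theorem contract_of_ne (ht : t ≠ D.sink) :
    D.contract x t = (D.redirect x (D.edge t)).erase t :=
  if_neg ht

variable (D)

theorem withSink_withSink (y : V) : (D.withSink x).withSink y = (D.withSink y).erase x := by
  rw [withSink, withSink, erase, withSink, erase_right_comm]

theorem weight_redirect (ρ : Bool → V) :
    (D.redirect x ρ).weight h = Function.update (D.weight h) x (twoEdgeRow h ρ) := by
  ext1 r
  rcases eq_or_ne r x with rfl | hr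
  · simp only [weight, redirect, Function.update_self]
  · simp only [weight, redirect, Function.update_of_ne hr]

end Operations

section Admissible

theorem Admissible.erase (hD : D.Admissible) (p : V) : (D.erase p).Admissible where
  sink_notMem := mt mem_of_mem_erase hD.sink_notMem
  injective r hr := hD.injective r (mem_of_mem_erase hr)

theorem Admissible.withSink (hD : D.Admissible) (x : V) : (D.withSink x).Admissible where
  sink_notMem := notMem_erase x D.inner
  injective r hr := hD.injective r (mem_of_mem_erase hr)

theorem Admissible.redirect (hD : D.Admissible) (x : V) {ρ : Bool → V}
    (hρ : Function.Injective ρ) : (D.redirect x ρ).Admissible where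
  sink_notMem := hD.sink_notMem
  injective r hr := by
    rcases eq_or_ne r x with rfl | hrx
    · simpa only [TwoEdgeDigraph.redirect, Function.update_self] using hρ
    · simpa only [TwoEdgeDigraph.redirect, Function.update_of_ne hrx] using hD.injective r hr

theorem Admissible.contract (hD : D.Admissible) (x : V) (ht : t ∈ insert D.sink D.inner) :
    (D.contract x t).Admissible := by
  rcases eq_or_ne t D.sink with rfl | hts
  · rw [contract_sink]
    exact hD.withSink x
  · rw [contract_of_ne x hts]
    exact (hD.redirect x (hD.injective t (mem_of_mem_insert_of_ne ht hts))).erase t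

theorem card_withSink (hx : x ∈ D.inner) : #(D.withSink x).inner + 1 = #D.inner :=
  card_erase_add_one hx

theorem card_contract (hx : x ∈ D.inner) (ht : t ∈ insert D.sink D.inner) :
    #(D.contract x t).inner + 1 = #D.inner := by
  rcases eq_or_ne t D.sink with rfl | hts
  · rw [contract_sink]
    exact card_withSink hx
  · rw [contract_of_ne x hts]
    exact card_erase_add_one (mem_of_mem_insert_of_ne ht hts)

end Admissible

section Useful

/-- The edge `ε` out of `r` could be part of a simple path that starts at `u`. -/
structure IsUseful (D : TwoEdgeDigraph V) (u r : V) (ε : Bool) : Prop where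
  ne_self : D.edge r ε ≠ r
  ne_start : D.edge r ε ≠ u
  mem : D.edge r ε ∈ insert D.sink D.inner

/-- Some edge out of an inner vertex is not useful. -/
def HasUseless (D : TwoEdgeDigraph V) (u : V) : Prop := ∃ r ∈ D.inner, ∃ ε, ¬D.IsUseful u r ε

theorem IsUseful.of_erase (hr : (D.erase p).IsUseful u r ε) : D.IsUseful u r ε where
  ne_self := hr.ne_self
  ne_start := hr.ne_start
  mem := insert_subset_insert _ (erase_subset _ _) hr.mem

theorem IsUseful.mem_erase (hD : D.Admissible) (hx : x ∈ D.inner) (huse : D.IsUseful u x (!ε)) :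
    D.edge x (!ε) ∈ insert D.sink (D.inner.erase (D.edge x ε)) :=
  mem_insert.2 ((mem_insert.1 huse.mem).imp_right fun h =>
    Finset.mem_erase.2 ⟨hD.edge_not_ne hx ε, h⟩)

theorem IsUseful.of_withSink (hD : D.sink ∉ D.inner) (hx : x ∈ D.inner)
    (hr : (D.withSink x).IsUseful u r ε) : D.IsUseful u r ε ∧ D.edge r ε ≠ D.sink := by
  have hmem : D.edge r ε ∈ insert x (D.inner.erase x) := hr.mem
  rw [insert_erase hx] at hmem
  exact ⟨⟨hr.ne_self, hr.ne_start, mem_insert_of_mem hmem⟩, ne_of_mem_of_not_mem hmem hD⟩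

theorem IsUseful.of_contract (hD : D.sink ∉ D.inner) (hx : x ∈ D.inner) (hrx : r ≠ x)
    (hr : (D.contract x t).IsUseful u r ε) : D.IsUseful u r ε ∧ D.edge r ε ≠ t := by
  rcases eq_or_ne t D.sink with rfl | hts
  · rw [contract_sink] at hr
    exact hr.of_withSink hD hx
  · rw [contract_of_ne x hts] at hr
    obtain ⟨hself, hstart, hmem⟩ := hr
    simp only [erase, redirect, Function.update_of_ne hrx] at hself hstart hmem
    refine ⟨⟨hself, hstart, insert_subset_insert _ (erase_subset _ _) hmem⟩, ?_⟩
    rintro rfl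
    exact notMem_erase _ _ (mem_of_mem_insert_of_ne hmem hts)

theorem IsUseful.of_contract_start (hts : t ≠ D.sink) (hx : (D.contract x t).IsUseful u x ε) :
    D.IsUseful u t ε := by
  rw [contract_of_ne x hts] at hx
  obtain ⟨-, hstart, hmem⟩ := hx
  simp only [erase, redirect, Function.update_self] at hstart hmem
  refine ⟨fun hself => ?_, hstart, insert_subset_insert _ (erase_subset _ _) hmem⟩
  rw [hself] at hmem
  exact notMem_erase _ _ (mem_of_mem_insert_of_ne hmem hts)

theorem HasUseless.contract (hD : D.sink ∉ D.inner) (hx : x ∈ D.inner) (htx : t ≠ x)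
    (hr : r ∈ D.inner) (hrx : r ≠ x) (hrε : ¬D.IsUseful u r ε ∨ r ≠ t ∧ D.edge r ε = t) :
    (D.contract x t).HasUseless u := by
  have huseless : r ≠ t → ¬(D.contract x t).IsUseful u r ε := fun _ hcon => by
    obtain ⟨huse, hne⟩ := hcon.of_contract hD hx hrx
    exact hrε.elim (· huse) (hne ·.2)
  rcases eq_or_ne t D.sink with rfl | hts
  · have hr' : r ∈ (D.contract x D.sink).inner := by
      rw [contract_sink]
      exact mem_erase.2 ⟨hrx, hr⟩
    exact ⟨r, hr', ε, huseless (ne_of_mem_of_not_mem hr hD)⟩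
  have hinner : (D.contract x t).inner = D.inner.erase t := by rw [contract_of_ne x hts]; rfl
  rcases eq_or_ne r t with rfl | hrt
  · exact ⟨x, hinner ▸ mem_erase.2 ⟨htx.symm, hx⟩, ε, fun hcon =>
      hrε.elim (· (hcon.of_contract_start hts)) (·.1 rfl)⟩
  · exact ⟨r, hinner ▸ mem_erase.2 ⟨hrt, hr⟩, ε, huseless hrt⟩

end Useful

section InEdges

/-- `x` is the only vertex other than `t = D.edge x ε` with an edge to `t`, and the edge to `t` is
useful. -/
structure IsSoleInEdge (D : TwoEdgeDigraph V) (u x : V) (ε : Bool) : Prop where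
  mem : x ∈ D.inner
  useful : D.IsUseful u x ε
  sole : ∀ r ∈ D.inner, r ≠ x → r ≠ D.edge x ε → ∀ ε', D.edge r ε' ≠ D.edge x ε

/-- The useful edges, represented by their origin and type. -/
noncomputable def usefulEdges (D : TwoEdgeDigraph V) (u : V) : Finset (V × Bool) :=
  {e ∈ D.inner ×ˢ univ | D.IsUseful u e.1 e.2}

/-- The useful edges with target `p`. -/
noncomputable def inEdges (D : TwoEdgeDigraph V) (u p : V) : Finset (V × Bool) :=
  {e ∈ D.usefulEdges u | D.edge e.1 e.2 = p}

theorem mem_usefulEdges {e : V × Bool} :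
    e ∈ D.usefulEdges u ↔ e.1 ∈ D.inner ∧ D.IsUseful u e.1 e.2 := by
  simp only [usefulEdges, mem_filter, mem_product, mem_univ, and_true]

theorem mem_inEdges {e : V × Bool} :
    e ∈ D.inEdges u p ↔ (e.1 ∈ D.inner ∧ D.IsUseful u e.1 e.2) ∧ D.edge e.1 e.2 = p := by
  rw [inEdges, mem_filter, mem_usefulEdges]

theorem mem_inEdges_of_ne (hup : u ≠ p) (hp : p ∈ insert D.sink D.inner) (hr : r ∈ D.inner)
    (hrp : r ≠ p) (hε : D.edge r ε = p) : (r, ε) ∈ D.inEdges u p :=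
  mem_inEdges.2 ⟨⟨hr, ⟨hε ▸ hrp.symm, hε ▸ hup.symm, hε ▸ hp⟩⟩, hε⟩

theorem card_usefulEdges_le (D : TwoEdgeDigraph V) (u : V) : #(D.usefulEdges u) ≤ #D.inner * 2 :=
  (card_filter_le _ _).trans_eq (card_product _ _)

theorem HasUseless.card_usefulEdges_lt (hu : D.HasUseless u) :
    #(D.usefulEdges u) < #D.inner * 2 := by
  obtain ⟨r, hr, ε, hε⟩ := hu
  refine (card_lt_card (filter_ssubset.2 ⟨(r, ε), ?_, hε⟩)).trans_eq (card_product _ _)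
  exact mem_product.2 ⟨hr, mem_univ ε⟩

theorem card_usefulEdges_eq_sum (D : TwoEdgeDigraph V) (u : V) :
    #(D.usefulEdges u) = ∑ p ∈ insert D.sink (D.inner.erase u), #(D.inEdges u p) := by
  refine card_eq_sum_card_fiberwise fun e he => ?_
  have huse := (mem_usefulEdges.1 he).2
  exact mem_insert.2 ((mem_insert.1 huse.mem).imp_right fun h => mem_erase.2 ⟨huse.ne_start, h⟩)

/-- There are as many possible targets as inner vertices, and each inner vertex has two outgoing
edges. -/
theorem exists_card_inEdges_le_one (hD : D.sink ∉ D.inner) (hu : u ∈ D.inner) :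
    (∃ p ∈ insert D.sink (D.inner.erase u), #(D.inEdges u p) ≤ 1) ∨
      ¬D.HasUseless u ∧ #(D.inEdges u D.sink) = 2 := by
  refine or_iff_not_imp_left.2 fun hcon => ?_
  have htwo : ∀ p ∈ insert D.sink (D.inner.erase u), 2 ≤ #(D.inEdges u p) := by
    push Not at hcon
    exact hcon
  have hcard : #(insert D.sink (D.inner.erase u)) = #D.inner := by
    rw [card_insert_of_notMem (mt mem_of_mem_erase hD), card_erase_add_one hu]
  have hle := sum_le_sum htwo
  have hsum := D.card_usefulEdges_eq_sum u
  have hconst : ∑ p ∈ insert D.sink (D.inner.erase u), 2 = #D.inner * 2 := by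
    rw [sum_const, hcard, smul_eq_mul]
  have hupper := D.card_usefulEdges_le u
  refine ⟨fun huseless => ?_, ?_⟩
  · have := huseless.card_usefulEdges_lt
    omega
  · exact ((sum_eq_sum_iff_of_le htwo).1 (by omega) D.sink (mem_insert_self ..)).symm

theorem exists_isSoleInEdge (hup : u ≠ p) (hp : p ∈ insert D.sink D.inner)
    (hcard : #(D.inEdges u p) = 1) : ∃ x ε, D.IsSoleInEdge u x ε := by
  obtain ⟨⟨x, ε⟩, heq⟩ := card_eq_one.1 hcard
  obtain ⟨⟨hx, huse⟩, rfl⟩ := mem_inEdges.1 (heq ▸ mem_singleton_self (x, ε))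
  refine ⟨x, ε, hx, huse, fun r hr hrx hrp ε' hε' => hrx ?_⟩
  have hmem := mem_inEdges_of_ne hup hp hr hrp hε'
  rw [heq, mem_singleton] at hmem
  exact congrArg Prod.fst hmem

end InEdges

section Paths

variable [Fintype V]

theorem paths_nonneg (hh : 0 ≤ h) (D : TwoEdgeDigraph V) (u : V) : 0 ≤ D.paths h u :=
  pathSum_nonneg (D.weight_nonneg hh) _ _ _

theorem pathsVia_nonneg (hh : 0 ≤ h) (D : TwoEdgeDigraph V) (x t u : V) :
    0 ≤ D.pathsVia h x t u :=
  pathSumVia_nonneg (D.weight_nonneg hh) _ _ _ _ _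

theorem paths_eq_erase_add_via (h : ℝ) (hx : x ≠ D.sink) (u : V) (ε : Bool) :
    D.paths h u = (D.erase x).paths h u + (edgeWeight h ε * D.pathsVia h x (D.edge x ε) u +
      edgeWeight h (!ε) * D.pathsVia h x (D.edge x (!ε)) u) := by
  rw [paths, pathSum_eq_erase_add_sum_via _ hx]
  exact congrArg _ (sum_twoEdgeRow_mul h _ _ ε)

theorem pathsVia_of_not_isUseful (h : ℝ) (hx : x ≠ D.sink)
    (hr : r = x ∨ r ∉ insert D.sink D.inner) (huse : ¬D.IsUseful u r ε) :
    D.pathsVia h x (D.edge r ε) u = 0 := by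
  have hout : ∀ t, t ∉ insert D.sink D.inner → D.pathsVia h x t u = 0 := fun t ht =>
    pathSumVia_target_notMem (ne_of_mem_of_not_mem (mem_insert_self ..) ht).symm
      (mt mem_insert_of_mem ht) u
  by_cases hmem : D.edge r ε ∈ insert D.sink D.inner
  swap
  · exact hout _ hmem
  by_cases hstart : D.edge r ε = u
  · rw [hstart]
    exact pathSumVia_target_start ..
  by_cases hself : D.edge r ε = r
  · rw [hself]
    rcases hr with rfl | hr
    exacts [pathSumVia_loop _ hx _ u, hout r hr]
  · exact absurd ⟨hself, hstart, hmem⟩ huse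

theorem paths_redirect (h : ℝ) (hx : x ≠ D.sink) (ρ : Bool → V) (u : V) :
    (D.redirect x ρ).paths h u =
      (D.erase x).paths h u + ∑ t, twoEdgeRow h ρ t * D.pathsVia h x t u := by
  rw [paths, weight_redirect]
  exact pathSum_update _ hx _ _ u

theorem paths_contract_of_ne (h : ℝ) (hx : x ≠ D.sink) (htx : t ≠ x) (hts : t ≠ D.sink)
    (ht : t ∈ D.inner) (u : V) : (D.contract x t).paths h u =
      ((D.erase x).erase t).paths h u + D.pathsVia h x t u := by
  have hweight : ((D.redirect x (D.edge t)).erase t).weight h =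
      Function.update (D.weight h) x (D.weight h t) := D.weight_redirect h x (D.edge t)
  rw [contract_of_ne x hts, paths, hweight]
  exact pathSum_contract (D.weight h) hx htx hts ht u

theorem pathsVia_sink (h : ℝ) (hD : D.sink ∉ D.inner) (hx : x ∈ D.inner) (u : V) :
    D.pathsVia h x D.sink u = (D.withSink x).paths h u :=
  pathSumVia_target_sink _ (ne_of_mem_of_not_mem hx hD) hD hx u

theorem pathsVia_le_contract (hh : 0 ≤ h) (hD : D.sink ∉ D.inner) (hx : x ∈ D.inner) (htx : t ≠ x)
    (ht : t ∈ insert D.sink D.inner) (u : V) :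
    D.pathsVia h x t u ≤ (D.contract x t).paths h u := by
  rcases eq_or_ne t D.sink with rfl | hts
  · rw [contract_sink, pathsVia_sink h hD hx]
  · rw [paths_contract_of_ne h (ne_of_mem_of_not_mem hx hD) htx hts
      (mem_of_mem_insert_of_ne ht hts)]
    exact le_add_of_nonneg_left (paths_nonneg hh _ u)

/-- Paths avoiding `x` also avoid the target of the edge, hence survive the contraction. -/
theorem IsSoleInEdge.erase_add_via (h : ℝ) (hD : D.sink ∉ D.inner) (hu : u ≠ D.sink)
    (he : D.IsSoleInEdge u x ε) :
    (D.erase x).paths h u + D.pathsVia h x (D.edge x ε) u =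
      (D.contract x (D.edge x ε)).paths h u := by
  have hxs := ne_of_mem_of_not_mem he.mem hD
  have hin : ∀ r ∈ D.inner.erase x, r ≠ D.edge x ε → D.weight h r (D.edge x ε) = 0 :=
    fun r hr hrt => twoEdgeRow_eq_zero h (he.sole r (mem_of_mem_erase hr) (ne_of_mem_erase hr) hrt)
  by_cases hts : D.edge x ε = D.sink
  · have hzero : (D.erase x).paths h u = 0 :=
      pathSum_eq_zero_of_no_in hu (mt mem_of_mem_erase hD) fun r hr =>
        hts ▸ hin r hr (hts ▸ ne_of_mem_of_not_mem (mem_of_mem_erase hr) hD)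
    rw [hzero, zero_add, hts, contract_sink, pathsVia_sink h hD he.mem]
  · rw [paths_contract_of_ne h hxs he.useful.ne_self hts
      (mem_of_mem_insert_of_ne he.useful.mem hts)]
    exact congrArg (· + _) (pathSum_erase_of_no_in he.useful.ne_start.symm hin).symm

/-- Only the edge `(x, D.edge x ε)` can leave `x` towards the sink. -/
theorem IsSoleInEdge.paths_le_contract (hh : 1 ≤ h) (hD : D.Admissible) (hu : u ≠ D.sink)
    (he : D.IsSoleInEdge u x ε) (hend : D.edge x ε = D.sink ∨ ¬D.IsUseful u x (!ε)) :
    D.paths h u ≤ edgeWeight h ε * (D.contract x (D.edge x ε)).paths h u := by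
  have hxs := ne_of_mem_of_not_mem he.mem hD.sink_notMem
  have hA := paths_nonneg (zero_le_one.trans hh) (D.erase x) u
  rcases hend with hsink | huse
  · have hlast : D.paths h u = D.weight h x D.sink * (D.withSink x).paths h u := by
      rw [paths, pathSum_eq_sum_last_edge _ hu hD.sink_notMem]
      refine sum_eq_single_of_mem x he.mem fun r hr hrx => ?_
      have hrs := ne_of_mem_of_not_mem hr hD.sink_notMem
      rw [weight, twoEdgeRow_eq_zero h (hsink ▸ he.sole r hr hrx (hsink ▸ hrs)), zero_mul]
    rw [hlast, hsink, contract_sink, ← hsink, weight, twoEdgeRow_apply h (hD.injective x he.mem)]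
  · rw [← he.erase_add_via h hD.sink_notMem hu, paths_eq_erase_add_via h hxs u ε,
      pathsVia_of_not_isUseful h hxs (.inl rfl) huse, mul_zero, add_zero, mul_add]
    exact add_le_add_left (le_mul_of_one_le_left hA (one_le_edgeWeight hh ε)) _

theorem IsSoleInEdge.pathsVia_erase (h : ℝ) (he : D.IsSoleInEdge u x ε) (ht : t ≠ D.edge x ε) :
    (D.erase (D.edge x ε)).pathsVia h x t u = D.pathsVia h x t u :=
  pathSumVia_erase_of_no_in he.useful.ne_start.symm ht fun r hr hrx hrp =>
    twoEdgeRow_eq_zero h (he.sole r hr hrx hrp)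

theorem IsSoleInEdge.paths_le_contract_add (hh : 1 ≤ h) (hD : D.Admissible) (hu : u ≠ D.sink)
    (he : D.IsSoleInEdge u x ε) (huse : D.IsUseful u x (!ε)) :
    D.paths h u ≤ edgeWeight h ε * (D.contract x (D.edge x ε)).paths h u +
      edgeWeight h (!ε) *
        ((D.erase (D.edge x ε)).contract x (D.edge x (!ε))).paths h u := by
  have hh0 := zero_le_one.trans hh
  have hA := paths_nonneg hh0 (D.erase x) u
  have hvia : D.pathsVia h x (D.edge x (!ε)) u ≤
      ((D.erase (D.edge x ε)).contract x (D.edge x (!ε))).paths h u := by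
    rw [← he.pathsVia_erase h (hD.edge_not_ne he.mem ε)]
    exact pathsVia_le_contract hh0 (hD.erase _).sink_notMem
      (Finset.mem_erase.2 ⟨he.useful.ne_self.symm, he.mem⟩) huse.ne_self
      (huse.mem_erase hD he.mem) u
  rw [← he.erase_add_via h hD.sink_notMem hu,
    paths_eq_erase_add_via h (ne_of_mem_of_not_mem he.mem hD.sink_notMem) u ε, mul_add, ← add_assoc]
  exact add_le_add (add_le_add_left (le_mul_of_one_le_left hA (one_le_edgeWeight hh ε)) _)
    (mul_le_mul_of_nonneg_left hvia (edgeWeight_nonneg hh0 _))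

end Paths

end TwoEdgeDigraph

/-- The growth rate `α` of the weighted number of simple paths in digraphs with one edge of
multiplicity `h` and one of multiplicity `1` out of every vertex, and the factor `c` that is lost
when every edge is useful. -/
structure GrowthRate (h c α : ℝ) : Prop where
  one_le : 1 ≤ h
  pos : 0 < α
  sq_eq : α ^ 2 = h * α + 1
  mul_eq : c * (h ^ 2 + 1) = α ^ 2

namespace GrowthRate

variable {h c α : ℝ}

theorem nonneg (H : GrowthRate h c α) : 0 ≤ h := zero_le_one.trans H.one_le

theorem le_rate (H : GrowthRate h c α) : h ≤ α := by
  nlinarith [H.pos, H.sq_eq]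

theorem one_le_rate (H : GrowthRate h c α) : 1 ≤ α := H.one_le.trans H.le_rate

theorem mul_rate_le (H : GrowthRate h c α) : h * α ≤ h ^ 2 + 1 := by
  nlinarith [H.sq_eq, H.le_rate, mul_nonneg (sub_nonneg.2 H.one_le) (sub_nonneg.2 H.le_rate)]

theorem one_le_const (H : GrowthRate h c α) : 1 ≤ c := by
  have hle : h ^ 2 + 1 ≤ c * (h ^ 2 + 1) := by
    rw [H.mul_eq, H.sq_eq, sq]
    gcongr
    exacts [H.nonneg, H.le_rate]
  exact one_le_of_le_mul_right₀ (by positivity) hle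

theorem const_nonneg (H : GrowthRate h c α) : 0 ≤ c := zero_le_one.trans H.one_le_const

theorem const_le (H : GrowthRate h c α) : c ≤ 3 / 2 := by
  have hle : c * (h ^ 2 + 1) ≤ 3 / 2 * (h ^ 2 + 1) := by
    rw [H.mul_eq, H.sq_eq]
    nlinarith [H.mul_rate_le, H.one_le]
  exact le_of_mul_le_mul_right hle (by positivity)

theorem mul_const_le (H : GrowthRate h c α) : h * c ≤ α := by
  have hle : h * c * (h ^ 2 + 1) ≤ α * (h ^ 2 + 1) := by
    rw [mul_assoc, H.mul_eq, sq, ← mul_assoc, mul_comm α]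
    exact mul_le_mul_of_nonneg_right H.mul_rate_le H.pos.le
  exact le_of_mul_le_mul_right hle (by positivity)

theorem le_const_mul_rate (H : GrowthRate h c α) : h ^ 3 + 3 * h ≤ c * α * (h ^ 2 + 1) := by
  have heq : c * α * (h ^ 2 + 1) = α * (h * α + 1) := by
    rw [← H.sq_eq, ← H.mul_eq]
    ring
  rw [heq]
  nlinarith [H.mul_rate_le, H.sq_eq, H.le_rate, H.pos]

theorem two_le_const_mul_rate (H : GrowthRate h c α) : 2 ≤ c * α := by
  refine le_of_mul_le_mul_right (a := h ^ 2 + 1) ?_ (by positivity)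
  nlinarith [H.le_const_mul_rate, mul_nonneg (sub_nonneg.2 H.one_le)
    (show 0 ≤ h ^ 2 - h + 2 by nlinarith [sq_nonneg (h - 1), H.one_le])]

theorem four_mul_le (H : GrowthRate h c α) : 4 * h ≤ (h + 1) * (c * α) := by
  have hh := H.nonneg
  refine le_of_mul_le_mul_right (a := h ^ 2 + 1) ?_ (by positivity)
  nlinarith [mul_le_mul_of_nonneg_left H.le_const_mul_rate (show 0 ≤ h + 1 by positivity),
    mul_nonneg hh (pow_nonneg (sub_nonneg.2 H.one_le) 3)]

theorem cube_add_le (H : GrowthRate h c α) : h ^ 3 + 2 * h - 1 ≤ h ^ 2 * (c * α) := by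
  refine le_of_mul_le_mul_right (a := h ^ 2 + 1) ?_ (by positivity)
  nlinarith [mul_le_mul_of_nonneg_left H.le_const_mul_rate (sq_nonneg h), sq_nonneg (h - 1)]

theorem edgeWeight_mul_add_le (H : GrowthRate h c α) (ε : Bool) :
    edgeWeight h ε * α + edgeWeight h (!ε) ≤ α ^ 2 := by
  rw [H.sq_eq]
  cases ε
  · change 1 * α + h ≤ h * α + 1
    nlinarith [mul_nonneg (sub_nonneg.2 H.one_le) (sub_nonneg.2 H.one_le_rate)]
  · exact le_rfl

theorem edgeWeight_mul_edgeWeight_add_le (H : GrowthRate h c α) (ε ε' : Bool) :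
    edgeWeight h ε * edgeWeight h ε' + edgeWeight h (!ε) ≤ h ^ 2 + 1 := by
  have hh := H.one_le
  cases ε <;> cases ε' <;> simp only [edgeWeight, cond, Bool.not_true, Bool.not_false] <;> nlinarith

theorem pow_le_const_mul_pow (H : GrowthRate h c α) (m : ℕ) : α ^ m ≤ c * α ^ m :=
  le_mul_of_one_le_left (pow_nonneg H.pos.le m) H.one_le_const

theorem mul_const_mul_pow_le (H : GrowthRate h c α) (m : ℕ) : h * (c * α ^ m) ≤ α ^ (m + 1) := by
  rw [← mul_assoc, pow_succ']
  exact mul_le_mul_of_nonneg_right H.mul_const_le (pow_nonneg H.pos.le m)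

end GrowthRate

theorem growthRate_alphaK {k : ℕ} (hk : 2 ≤ k) :
    GrowthRate ((k : ℝ) - 1) (alphaK k ^ 2 / (((k : ℝ) - 1) ^ 2 + 1)) (alphaK k) where
  one_le := by
    have hk' : (2 : ℝ) ≤ k := Nat.ofNat_le_cast.2 hk
    linarith
  pos := by
    have hk' : (2 : ℝ) ≤ k := Nat.ofNat_le_cast.2 hk
    have hsqrt := Real.sqrt_nonneg (((k : ℝ) - 1) ^ 2 + 4)
    rw [alphaK]
    linarith
  sq_eq := by
    have hsqrt := Real.sq_sqrt (show 0 ≤ ((k : ℝ) - 1) ^ 2 + 4 by positivity)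
    rw [alphaK]
    linarith
  mul_eq := div_mul_cancel₀ _ (by positivity)

namespace TwoEdgeDigraph

variable {V : Type*} [Fintype V] [DecidableEq V] {D : TwoEdgeDigraph V} {h c α : ℝ}
  {u x t r p w : V} {ε ε₁ ε₂ : Bool} {m : ℕ}

/-- The two bounds of the induction on the number of inner vertices; a useless edge saves the factor
`c`. -/
structure IsBounded (D : TwoEdgeDigraph V) (h c α : ℝ) (u : V) : Prop where
  paths_le : D.paths h u ≤ c * α ^ #D.inner
  paths_le_pow : D.HasUseless u → D.paths h u ≤ α ^ #D.inner

theorem isBounded_of_paths_le_pow (H : GrowthRate h c α) (hD : D.paths h u ≤ α ^ #D.inner) :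
    D.IsBounded h c α u where
  paths_le := hD.trans (H.pow_le_const_mul_pow _)
  paths_le_pow _ := hD

/-- The induction hypothesis: the bounds hold for fewer than `m` inner vertices. -/
def BoundedBelow (h c α : ℝ) (u : V) (m : ℕ) : Prop :=
  ∀ D : TwoEdgeDigraph V, D.Admissible → #D.inner < m → D.IsBounded h c α u

namespace BoundedBelow

theorem mono {n : ℕ} (B : BoundedBelow h c α u m) (hn : n ≤ m) : BoundedBelow h c α u n :=
  fun D hD hcard => B D hD (hcard.trans_le hn)

theorem erase (B : BoundedBelow h c α u #D.inner) (hD : D.Admissible) (hp : p ∈ D.inner) :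
    (D.erase p).IsBounded h c α u :=
  B _ (hD.erase p) (card_erase_lt_of_mem hp)

theorem contract (B : BoundedBelow h c α u #D.inner) (hD : D.Admissible) (hx : x ∈ D.inner)
    (ht : t ∈ insert D.sink D.inner) : (D.contract x t).IsBounded h c α u :=
  B _ (hD.contract x ht) (Nat.lt_of_succ_le (card_contract hx ht).le)

theorem erase_contract (B : BoundedBelow h c α u #D.inner) (hD : D.Admissible) (hp : p ∈ D.inner)
    (hx : x ∈ (D.erase p).inner) (ht : t ∈ insert (D.erase p).sink (D.erase p).inner) :
    ((D.erase p).contract x t).IsBounded h c α u :=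
  (B.mono (card_erase_lt_of_mem hp).le).contract (hD.erase p) hx ht

end BoundedBelow

namespace IsSoleInEdge

theorem paths_le_pow_of_end (H : GrowthRate h c α) (B : BoundedBelow h c α u #D.inner)
    (hD : D.Admissible) (hu : u ≠ D.sink) (he : D.IsSoleInEdge u x ε)
    (hend : D.edge x ε = D.sink ∨ ¬D.IsUseful u x (!ε)) : D.paths h u ≤ α ^ #D.inner := by
  have hcontract := (B.contract hD he.mem he.useful.mem).paths_le
  have hnonneg := paths_nonneg H.nonneg (D.contract x (D.edge x ε)) u
  calc
    _ ≤ edgeWeight h ε * (D.contract x (D.edge x ε)).paths h u :=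
      he.paths_le_contract H.one_le hD hu hend
    _ ≤ h * (c * α ^ #(D.contract x (D.edge x ε)).inner) :=
      mul_le_mul (edgeWeight_le H.one_le ε) hcontract hnonneg H.nonneg
    _ ≤ α ^ (#(D.contract x (D.edge x ε)).inner + 1) := H.mul_const_mul_pow_le _
    _ = α ^ #D.inner := by rw [card_contract he.mem he.useful.mem]

theorem paths_le_mul_pow (H : GrowthRate h c α) (hD : D.Admissible) (hu : u ≠ D.sink)
    (he : D.IsSoleInEdge u x ε) (hp : D.edge x ε ∈ D.inner) (huse : D.IsUseful u x (!ε)) {d : ℝ}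
    (hd : 0 ≤ d)
    (h₁ : (D.contract x (D.edge x ε)).paths h u ≤ d * α ^ #(D.contract x (D.edge x ε)).inner)
    (h₂ : ((D.erase (D.edge x ε)).contract x (D.edge x (!ε))).paths h u ≤
      d * α ^ #((D.erase (D.edge x ε)).contract x (D.edge x (!ε))).inner) :
    D.paths h u ≤ d * α ^ #D.inner := by
  obtain ⟨m, hm⟩ : ∃ m, m = #((D.erase (D.edge x ε)).contract x (D.edge x (!ε))).inner := ⟨_, rfl⟩
  have hxp : x ∈ (D.erase (D.edge x ε)).inner := mem_erase.2 ⟨he.useful.ne_self.symm, he.mem⟩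
  have hm₂ := card_contract hxp (huse.mem_erase hD he.mem)
  have hm₁ := card_contract he.mem he.useful.mem
  have hmp : #(D.erase (D.edge x ε)).inner + 1 = #D.inner := card_erase_add_one hp
  rw [show #(D.contract x (D.edge x ε)).inner = m + 1 by omega] at h₁
  rw [← hm] at h₂
  rw [show #D.inner = m + 2 by omega]
  calc
    _ ≤ edgeWeight h ε * (d * α ^ (m + 1)) + edgeWeight h (!ε) * (d * α ^ m) :=
      (he.paths_le_contract_add H.one_le hD hu huse).trans <| add_le_add
        (mul_le_mul_of_nonneg_left h₁ (edgeWeight_nonneg H.nonneg _))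
        (mul_le_mul_of_nonneg_left h₂ (edgeWeight_nonneg H.nonneg _))
    _ = d * α ^ m * (edgeWeight h ε * α + edgeWeight h (!ε)) := by ring
    _ ≤ d * α ^ m * α ^ 2 := mul_le_mul_of_nonneg_left (H.edgeWeight_mul_add_le ε)
      (mul_nonneg hd (pow_nonneg H.pos.le m))
    _ = d * α ^ (m + 2) := by ring

theorem paths_le (H : GrowthRate h c α) (B : BoundedBelow h c α u #D.inner)
    (hD : D.Admissible) (hu : u ≠ D.sink) (he : D.IsSoleInEdge u x ε) :
    D.paths h u ≤ c * α ^ #D.inner := by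
  by_cases hend : D.edge x ε = D.sink ∨ ¬D.IsUseful u x (!ε)
  · exact (he.paths_le_pow_of_end H B hD hu hend).trans (H.pow_le_const_mul_pow _)
  obtain ⟨hps, huse⟩ := not_or.1 hend
  rw [not_not] at huse
  have hp := mem_of_mem_insert_of_ne he.useful.mem hps
  exact he.paths_le_mul_pow H hD hu hp huse H.const_nonneg
    (B.contract hD he.mem he.useful.mem).paths_le
    (B.erase_contract hD hp (mem_erase.2 ⟨he.useful.ne_self.symm, he.mem⟩)
      (huse.mem_erase hD he.mem)).paths_le

/-- The edges out of `r` and `w` are useless in the two contractions of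
`paths_le_contract_add`. -/
theorem paths_le_pow_of_useless (H : GrowthRate h c α) (B : BoundedBelow h c α u #D.inner)
    (hD : D.Admissible) (hu : u ≠ D.sink) (he : D.IsSoleInEdge u x ε)
    (hr : r ∈ D.inner) (hrx : r ≠ x) (hrε : ¬D.IsUseful u r ε₁)
    (hw : w ∈ D.inner) (hwx : w ≠ x) (hwp : w ≠ D.edge x ε)
    (hwε : ¬D.IsUseful u w ε₂ ∨ w ≠ D.edge x (!ε) ∧ D.edge w ε₂ = D.edge x (!ε)) :
    D.paths h u ≤ α ^ #D.inner := by
  by_cases hend : D.edge x ε = D.sink ∨ ¬D.IsUseful u x (!ε)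
  · exact he.paths_le_pow_of_end H B hD hu hend
  obtain ⟨hps, huse⟩ := not_or.1 hend
  rw [not_not] at huse
  have hp := mem_of_mem_insert_of_ne he.useful.mem hps
  have hxp : x ∈ (D.erase (D.edge x ε)).inner := mem_erase.2 ⟨he.useful.ne_self.symm, he.mem⟩
  have hcontract : (D.contract x (D.edge x ε)).HasUseless u :=
    .contract hD.sink_notMem he.mem he.useful.ne_self hr hrx (.inl hrε)
  have hcontract' : ((D.erase (D.edge x ε)).contract x (D.edge x (!ε))).HasUseless u :=
    .contract (hD.erase _).sink_notMem hxp huse.ne_self (mem_erase.2 ⟨hwp, hw⟩) hwx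
      (hwε.imp_left (mt IsUseful.of_erase))
  rw [← one_mul (α ^ _)]
  refine he.paths_le_mul_pow H hD hu hp huse zero_le_one ?_ ?_ <;> rw [one_mul]
  · exact (B.contract hD he.mem he.useful.mem).paths_le_pow hcontract
  · exact (B.erase_contract hD hp hxp (huse.mem_erase hD he.mem)).paths_le_pow hcontract'

end IsSoleInEdge

theorem pathsVia_eq_mul_next (h : ℝ) (hD : D.Admissible) (hxs : x ≠ D.sink) (hpx : p ≠ x)
    (hp : p ∈ D.inner) (huseless : ¬D.IsUseful u p (!ε)) :
    D.pathsVia h x p u = edgeWeight h ε * (D.erase p).pathsVia h x (D.edge p ε) u := by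
  have hps := ne_of_mem_of_not_mem hp hD.sink_notMem
  have hnotMem : p ∉ insert (D.erase p).sink (D.erase p).inner := fun hmem =>
    (mem_insert.1 hmem).elim hps (notMem_erase p D.inner)
  have hzero : (D.erase p).pathsVia h x (D.edge p (!ε)) u = 0 :=
    pathsVia_of_not_isUseful (D := D.erase p) h hxs (.inr hnotMem) (mt IsUseful.of_erase huseless)
  calc
    _ = ∑ t, twoEdgeRow h (D.edge p) t * (D.erase p).pathsVia h x t u :=
      pathSumVia_eq_sum_next _ hpx hps hp u
    _ = _ := by rw [sum_twoEdgeRow_mul h _ _ ε, hzero, mul_zero, add_zero]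

namespace IsSoleInEdge

theorem paths_erase_erase (h : ℝ) (he : D.IsSoleInEdge u x ε) :
    ((D.erase (D.edge x ε)).erase x).paths h u = (D.erase x).paths h u := by
  rw [paths, erase, erase, erase_right_comm]
  exact pathSum_erase_of_no_in he.useful.ne_start.symm fun r hr hrp => twoEdgeRow_eq_zero h <|
    he.sole r (mem_of_mem_erase hr) (ne_of_mem_erase hr) hrp

/-- Here all simple paths through `x` continue to `q = D.edge x (!ε)`, directly or via
`p = D.edge x ε`. -/
theorem paths_le_pow_of_triangle (H : GrowthRate h c α) (B : BoundedBelow h c α u #D.inner)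
    (hD : D.Admissible) (hu : u ≠ D.sink) (he : D.IsSoleInEdge u x ε) (hp : D.edge x ε ∈ D.inner)
    (he' : (D.erase (D.edge x ε)).IsSoleInEdge u x (!ε))
    (hpq : D.edge (D.edge x ε) ε₁ = D.edge x (!ε))
    (huseless : ¬D.IsUseful u (D.edge x ε) (!ε₁)) : D.paths h u ≤ α ^ #D.inner := by
  have hxs := ne_of_mem_of_not_mem he.mem hD.sink_notMem
  set D' := D.erase (D.edge x ε)
  set a := (D'.erase x).paths h u
  set b := D'.pathsVia h x (D.edge x (!ε)) u
  have hsum : D.paths h u = a + (edgeWeight h ε * edgeWeight h ε₁ + edgeWeight h (!ε)) * b := by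
    rw [paths_eq_erase_add_via h hxs u ε, ← he.paths_erase_erase,
      pathsVia_eq_mul_next h hD hxs he.useful.ne_self hp huseless, hpq,
      ← he.pathsVia_erase h (hD.edge_not_ne he.mem ε)]
    ring
  have hab : a + b ≤ c * α ^ #(D'.contract x (D.edge x (!ε))).inner :=
    (he'.erase_add_via h (hD.erase _).sink_notMem hu).trans_le
      (B.erase_contract hD hp he'.mem he'.useful.mem).paths_le
  have hcard : #(D'.contract x (D.edge x (!ε))).inner + 2 = #D.inner := by
    rw [← card_erase_add_one hp]
    exact congrArg (· + 1) (card_contract he'.mem he'.useful.mem)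
  have ha : 0 ≤ a := paths_nonneg H.nonneg _ _
  have hb : 0 ≤ b := pathsVia_nonneg H.nonneg _ _ _ _
  calc
    _ ≤ (h ^ 2 + 1) * a + (h ^ 2 + 1) * b := hsum.trans_le <| add_le_add
      (le_mul_of_one_le_left ha (le_add_of_nonneg_left (sq_nonneg h)))
      (mul_le_mul_of_nonneg_right (H.edgeWeight_mul_edgeWeight_add_le ε ε₁) hb)
    _ ≤ (h ^ 2 + 1) * (c * α ^ #(D'.contract x (D.edge x (!ε))).inner) := by
      rw [← mul_add]
      exact mul_le_mul_of_nonneg_left hab (by positivity)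
    _ = α ^ #D.inner := by
      rw [← mul_assoc, mul_comm _ c, H.mul_eq, ← pow_add, add_comm, hcard]

theorem paths_le_pow_of_target_useless (H : GrowthRate h c α) (B : BoundedBelow h c α u #D.inner)
    (hD : D.Admissible) (hu : u ≠ D.sink) (he : D.IsSoleInEdge u x ε) (hp : D.edge x ε ∈ D.inner)
    (huse : D.IsUseful u x (!ε)) (huseless : ¬D.IsUseful u (D.edge x ε) ε₁) :
    D.paths h u ≤ α ^ #D.inner := by
  have hpx := he.useful.ne_self
  by_cases hw : ∃ w ∈ D.inner, w ≠ x ∧ w ≠ D.edge x ε ∧ w ≠ D.edge x (!ε) ∧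
      ∃ ε', D.edge w ε' = D.edge x (!ε)
  · obtain ⟨w, hw, hwx, hwp, hwq, ε', hwε⟩ := hw
    exact he.paths_le_pow_of_useless H B hD hu hp hpx huseless hw hwx hwp (.inr ⟨hwq, hwε⟩)
  push Not at hw
  by_cases hpq : ∃ ε', D.edge (D.edge x ε) ε' = D.edge x (!ε)
  · obtain ⟨ε', hε'⟩ := hpq
    have hpq_useful : D.IsUseful u (D.edge x ε) ε' :=
      ⟨hε' ▸ hD.edge_not_ne he.mem ε, hε' ▸ huse.ne_start, hε' ▸ huse.mem⟩
    obtain rfl : ε₁ = !ε' := Bool.eq_not_of_ne fun heq => huseless (heq ▸ hpq_useful)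
    refine he.paths_le_pow_of_triangle H B hD hu hp ?_ hε' huseless
    refine ⟨mem_erase.2 ⟨hpx.symm, he.mem⟩,
      ⟨huse.ne_self, huse.ne_start, huse.mem_erase hD he.mem⟩, fun r hr hrx hrq => ?_⟩
    exact hw r (mem_of_mem_erase hr) hrx (ne_of_mem_erase hr) hrq
  · push Not at hpq
    have he' : D.IsSoleInEdge u x (!ε) := by
      refine ⟨he.mem, huse, fun r hr hrx hrq => ?_⟩
      by_cases hrp : r = D.edge x ε
      exacts [hrp ▸ hpq, hw r hr hrx hrp hrq]
    exact he'.paths_le_pow_of_useless H B hD hu hp hpx huseless hp hpx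
      (hD.edge_not_ne he.mem ε).symm (.inl huseless)

theorem paths_le_pow (H : GrowthRate h c α) (B : BoundedBelow h c α u #D.inner)
    (hD : D.Admissible) (hu : u ≠ D.sink) (he : D.IsSoleInEdge u x ε) (huseless : D.HasUseless u) :
    D.paths h u ≤ α ^ #D.inner := by
  obtain ⟨r, hr, ε₁, hrε⟩ := huseless
  by_cases hend : D.edge x ε = D.sink ∨ ¬D.IsUseful u x (!ε)
  · exact he.paths_le_pow_of_end H B hD hu hend
  obtain ⟨hps, huse⟩ := not_or.1 hend
  rw [not_not] at huse
  have hrx : r ≠ x := by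
    rintro rfl
    rcases Bool.eq_or_eq_not ε₁ ε with rfl | rfl
    exacts [hrε he.useful, hrε huse]
  by_cases hrp : r = D.edge x ε
  · exact he.paths_le_pow_of_target_useless H B hD hu (hrp ▸ hr) huse (hrp ▸ hrε)
  · exact he.paths_le_pow_of_useless H B hD hu hr hrx hrε hr hrx hrp (.inl hrε)

theorem isBounded (H : GrowthRate h c α) (B : BoundedBelow h c α u #D.inner)
    (hD : D.Admissible) (hu : u ≠ D.sink) (he : D.IsSoleInEdge u x ε) : D.IsBounded h c α u where
  paths_le := he.paths_le H B hD hu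
  paths_le_pow := he.paths_le_pow H B hD hu

end IsSoleInEdge

theorem paths_le_pow_of_inEdges_eq_empty (H : GrowthRate h c α) (B : BoundedBelow h c α u #D.inner)
    (hD : D.Admissible) (hu : u ≠ D.sink) (hup : u ≠ p) (hp : p ∈ insert D.sink D.inner)
    (hin : D.inEdges u p = ∅) : D.paths h u ≤ α ^ #D.inner := by
  have hweight : ∀ r ∈ D.inner, r ≠ p → D.weight h r p = 0 := fun r hr hrp =>
    twoEdgeRow_eq_zero h fun ε hε => notMem_empty _ (hin ▸ mem_inEdges_of_ne hup hp hr hrp hε)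
  rcases eq_or_ne p D.sink with rfl | hps
  · rw [paths, pathSum_eq_zero_of_no_in hu hD.sink_notMem fun r hr =>
      hweight r hr (ne_of_mem_of_not_mem hr hD.sink_notMem)]
    exact pow_nonneg H.pos.le _
  have hp' := mem_of_mem_insert_of_ne hp hps
  calc
    D.paths h u = (D.erase p).paths h u := (pathSum_erase_of_no_in hup hweight).symm
    _ ≤ h * (c * α ^ #(D.erase p).inner) :=
      (B.erase hD hp').paths_le.trans <| le_mul_of_one_le_left
        (mul_nonneg H.const_nonneg (pow_nonneg H.pos.le _)) H.one_le
    _ ≤ α ^ (#(D.erase p).inner + 1) := H.mul_const_mul_pow_le _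
    _ = α ^ #D.inner := congrArg _ (card_erase_add_one hp')

theorem isBounded_of_card_inEdges_le_one (H : GrowthRate h c α)
    (B : BoundedBelow h c α u #D.inner) (hD : D.Admissible) (hu : u ≠ D.sink) (hup : u ≠ p)
    (hp : p ∈ insert D.sink D.inner) (hcard : #(D.inEdges u p) ≤ 1) : D.IsBounded h c α u := by
  rcases Nat.le_one_iff_eq_zero_or_eq_one.1 hcard with hcard | hcard
  · exact isBounded_of_paths_le_pow H
      (paths_le_pow_of_inEdges_eq_empty H B hD hu hup hp (card_eq_zero.1 hcard))
  · obtain ⟨x, ε, he⟩ := exists_isSoleInEdge hup hp hcard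
    exact he.isBounded H B hD hu

section TwoInEdges

/-- Make the light edge out of `x` a loop, hence useless, and the heavy edge an edge to `t`. -/
theorem erase_add_mul_via_le_pow (B : BoundedBelow h c α u m)
    (hD : D.Admissible) (hcard : #D.inner < m) (hx : x ∈ D.inner) (htx : t ≠ x) :
    (D.erase x).paths h u + h * D.pathsVia h x t u ≤ α ^ #D.inner := by
  have hxs := ne_of_mem_of_not_mem hx hD.sink_notMem
  have hρ : Function.Injective fun ε => cond ε t x :=
    Bool.injective_iff.2 htx.symm
  have huseless : (D.redirect x fun ε => cond ε t x).HasUseless u :=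
    ⟨x, hx, false, fun huse => huse.ne_self (congrFun (Function.update_self x _ D.edge) false)⟩
  have hloop : D.pathsVia h x x u = 0 := pathSumVia_loop _ hxs _ _
  calc
    _ = (D.redirect x fun ε => cond ε t x).paths h u := by
      rw [paths_redirect h hxs, sum_twoEdgeRow_mul h _ _ true]
      simp only [edgeWeight, cond, Bool.not_true, hloop, mul_zero, add_zero]
    _ ≤ α ^ #D.inner := (B _ (hD.redirect x hρ) hcard).paths_le_pow huseless

theorem paths_eq_sum_withSink (h : ℝ) (hD : D.Admissible) (hu : u ≠ D.sink)
    (hin : D.inEdges u D.sink = {(p, ε₁), (r, ε₂)}) (hpr : p ≠ r) : D.paths h u =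
      edgeWeight h ε₁ * (D.withSink p).paths h u + edgeWeight h ε₂ * (D.withSink r).paths h u := by
  obtain ⟨⟨hp, -⟩, hpε⟩ := mem_inEdges.1 (hin ▸ mem_insert_self (p, ε₁) {(r, ε₂)})
  obtain ⟨⟨hr, -⟩, hrε⟩ := mem_inEdges.1
    (hin ▸ mem_insert_of_mem (mem_singleton_self (r, ε₂)) : (r, ε₂) ∈ D.inEdges u D.sink)
  have hsub : {p, r} ⊆ D.inner := insert_subset hp (singleton_subset_iff.2 hr)
  rw [paths, pathSum_eq_sum_last_edge _ hu hD.sink_notMem, ← sum_subset hsub, sum_pair hpr]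
  · rw [weight, weight, ← hpε, twoEdgeRow_apply h (hD.injective p hp), hpε, ← hrε,
      twoEdgeRow_apply h (hD.injective r hr)]
    rfl
  · intro w hw hwpr
    rw [weight, twoEdgeRow_eq_zero h, zero_mul]
    intro ε hε
    have hmem := mem_inEdges_of_ne hu (mem_insert_self ..) hw
      (ne_of_mem_of_not_mem hw hD.sink_notMem) hε
    rw [hin, mem_insert, mem_singleton, Prod.mk.injEq, Prod.mk.injEq] at hmem
    exact hwpr (mem_insert.2 (hmem.imp And.left fun h => mem_singleton.2 h.1))

/-- The edge from `r` to the former sink is useless for paths ending at `p`. -/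
theorem paths_withSink_eq (h : ℝ) (hD : D.Admissible) (hp : p ∈ D.inner) (hpr : p ≠ r)
    (hrs : D.edge r ε = D.sink) (u : V) : (D.withSink p).paths h u =
      ((D.withSink p).erase r).paths h u +
        edgeWeight h (!ε) * (D.withSink p).pathsVia h r (D.edge r (!ε)) u := by
  have huseless : ¬(D.withSink p).IsUseful u r ε := fun huse =>
    (huse.of_withSink hD.sink_notMem hp).2 hrs
  have hzero : (D.withSink p).pathsVia h r (D.edge r ε) u = 0 :=
    pathsVia_of_not_isUseful (D := D.withSink p) h hpr.symm (.inl rfl) huseless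
  rw [paths_eq_erase_add_via h (D := D.withSink p) hpr.symm u ε]
  change _ + (_ * (D.withSink p).pathsVia h r (D.edge r ε) u + _) = _
  rw [hzero, mul_zero, zero_add]
  rfl

theorem withSink_erase_add_mul_le_pow (B : BoundedBelow h c α u #D.inner)
    (hD : D.Admissible) (hp : p ∈ D.inner) (hr : r ∈ D.inner) (hpr : p ≠ r) (htr : t ≠ r) :
    ((D.withSink p).erase r).paths h u + h * (D.withSink p).pathsVia h r t u ≤
        α ^ #(D.withSink p).inner ∧
      ((D.withSink p).erase r).paths h u + h * ((D.withSink r).erase p).paths h u ≤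
        α ^ #(D.withSink p).inner := by
  have hD' := hD.withSink p
  have hcard : #(D.withSink p).inner < #D.inner := Nat.lt_of_succ_le (card_withSink hp).le
  have hr' : r ∈ (D.withSink p).inner := mem_erase.2 ⟨hpr.symm, hr⟩
  refine ⟨erase_add_mul_via_le_pow B hD' hcard hr' htr, ?_⟩
  rw [← D.withSink_withSink p r, ← pathsVia_sink h hD'.sink_notMem hr']
  exact erase_add_mul_via_le_pow B hD' hcard hr' hpr

section Numeric

variable {a b a' b' d : ℝ}

theorem mul_add_add_le_of_add_mul_le (H : GrowthRate h c α) (ha : 0 ≤ a) (hd : 0 ≤ d)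
    (hab : a + h * b ≤ d) (haa' : a + h * a' ≤ d) (hab' : a' + h * b' ≤ d) :
    h * (a + h * b) + (a' + b') ≤ c * α * d := by
  have hh := H.one_le
  have hle : h ^ 2 * (h * (a + h * b) + (a' + b')) ≤ (h ^ 3 + 2 * h - 1) * d := by
    nlinarith [mul_le_mul_of_nonneg_left hab (show 0 ≤ h ^ 3 by positivity),
      mul_le_mul_of_nonneg_left hab' (show 0 ≤ h by positivity),
      mul_le_mul_of_nonneg_left haa' (sub_nonneg.2 hh), mul_nonneg (sub_nonneg.2 hh) ha]
  refine le_of_mul_le_mul_left (a := h ^ 2) ?_ (by positivity)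
  calc
    _ ≤ h ^ 2 * (c * α) * d := hle.trans (mul_le_mul_of_nonneg_right H.cube_add_le hd)
    _ = h ^ 2 * (c * α * d) := mul_assoc ..

theorem mul_add_add_mul_add_le_of_add_mul_le (H : GrowthRate h c α) (hd : 0 ≤ d)
    (hab : a + h * b ≤ d) (haa' : a + h * a' ≤ d) (hab' : a' + h * b' ≤ d)
    (haa : a' + h * a ≤ d) : h * (a + b) + h * (a' + b') ≤ c * α * d := by
  have hh := H.one_le
  have hle : (h + 1) * (h * (a + b) + h * (a' + b')) ≤ 4 * h * d := by
    nlinarith [mul_le_mul_of_nonneg_left haa' (sub_nonneg.2 hh),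
      mul_le_mul_of_nonneg_left haa (sub_nonneg.2 hh),
      mul_le_mul_of_nonneg_left hab (show 0 ≤ h + 1 by positivity),
      mul_le_mul_of_nonneg_left hab' (show 0 ≤ h + 1 by positivity)]
  refine le_of_mul_le_mul_left (a := h + 1) ?_ (by positivity)
  calc
    _ ≤ (h + 1) * (c * α) * d := hle.trans (mul_le_mul_of_nonneg_right H.four_mul_le hd)
    _ = (h + 1) * (c * α * d) := mul_assoc ..

theorem edgeWeight_mul_add_edgeWeight_mul_le (H : GrowthRate h c α) (ha : 0 ≤ a) (ha' : 0 ≤ a')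
    (hd : 0 ≤ d) (hab : a + h * b ≤ d) (haa' : a + h * a' ≤ d) (hab' : a' + h * b' ≤ d)
    (haa : a' + h * a ≤ d) (ε₁ ε₂ : Bool) :
    edgeWeight h ε₁ * (a + edgeWeight h (!ε₂) * b) +
      edgeWeight h ε₂ * (a' + edgeWeight h (!ε₁) * b') ≤ c * α * d := by
  cases ε₁ <;> cases ε₂ <;> simp only [edgeWeight, cond, Bool.not_true, Bool.not_false, one_mul]
  · calc
      _ ≤ 2 * d := (add_le_add hab hab').trans_eq (two_mul d).symm
      _ ≤ c * α * d := mul_le_mul_of_nonneg_right H.two_le_const_mul_rate hd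
  · rw [add_comm]
    exact mul_add_add_le_of_add_mul_le H ha' hd hab' haa hab
  · exact mul_add_add_le_of_add_mul_le H ha hd hab haa' hab'
  · exact mul_add_add_mul_add_le_of_add_mul_le H hd hab haa' hab' haa

end Numeric

theorem paths_le_of_card_inEdges_sink_eq_two (H : GrowthRate h c α)
    (B : BoundedBelow h c α u #D.inner) (hD : D.Admissible) (hu : u ≠ D.sink)
    (huseful : ¬D.HasUseless u) (hcard : #(D.inEdges u D.sink) = 2) :
    D.paths h u ≤ c * α ^ #D.inner := by
  obtain ⟨⟨p, ε₁⟩, ⟨r, ε₂⟩, hne, hin⟩ := card_eq_two.1 hcard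
  obtain ⟨⟨hp, -⟩, hpε⟩ := mem_inEdges.1 (hin ▸ mem_insert_self (p, ε₁) {(r, ε₂)})
  obtain ⟨⟨hr, -⟩, hrε⟩ := mem_inEdges.1
    (hin ▸ mem_insert_of_mem (mem_singleton_self (r, ε₂)) : (r, ε₂) ∈ D.inEdges u D.sink)
  have hpr : p ≠ r := by
    rintro rfl
    exact hne (congrArg _ (hD.injective p hp (hpε.trans hrε.symm)))
  have hloop : ∀ w ∈ D.inner, ∀ ε, D.edge w ε ≠ w := fun w hw ε hloop =>
    huseful ⟨w, hw, ε, fun huse => huse.ne_self hloop⟩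
  have hcard' : #(D.withSink r).inner = #(D.withSink p).inner :=
    Nat.succ_injective ((card_withSink hr).trans (card_withSink hp).symm)
  obtain ⟨hab, haa'⟩ := withSink_erase_add_mul_le_pow B hD hp hr hpr (hloop r hr (!ε₂))
  obtain ⟨hab', haa⟩ := withSink_erase_add_mul_le_pow B hD hr hp hpr.symm (hloop p hp (!ε₁))
  rw [hcard'] at hab' haa
  rw [paths_eq_sum_withSink h hD hu hin hpr, paths_withSink_eq h hD hp hpr hrε,
    paths_withSink_eq h hD hr hpr.symm hpε, ← card_withSink hp, pow_succ', ← mul_assoc]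
  exact edgeWeight_mul_add_edgeWeight_mul_le H (paths_nonneg H.nonneg _ _)
    (paths_nonneg H.nonneg _ _) (pow_nonneg H.pos.le _) hab haa' hab' haa ε₁ ε₂

end TwoInEdges

theorem Admissible.isBounded (H : GrowthRate h c α) (hD : D.Admissible) (u : V) :
    D.IsBounded h c α u := by
  induction hm : #D.inner using Nat.strong_induction_on generalizing D with
  | _ m ih =>
  have B : BoundedBelow h c α u #D.inner := fun D' hD' hcard => ih _ (hm ▸ hcard) hD' rfl
  rcases eq_or_ne u D.sink with rfl | hus
  · exact isBounded_of_paths_le_pow H ((pathSum_sink ..).trans_le (one_le_pow₀ H.one_le_rate))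
  by_cases hu : u ∈ D.inner
  swap
  · exact isBounded_of_paths_le_pow H
      ((pathSum_of_notMem hus hu).trans_le (pow_nonneg H.pos.le _))
  rcases exists_card_inEdges_le_one hD.sink_notMem hu with ⟨p, hp, hcard⟩ | ⟨huseful, hcard⟩
  · have hup : u ≠ p := by
      rintro rfl
      exact (mem_insert.1 hp).elim hus (notMem_erase u _)
    exact isBounded_of_card_inEdges_le_one H B hD hus hup
      (insert_subset_insert _ (erase_subset ..) hp) hcard
  · exact ⟨paths_le_of_card_inEdges_sink_eq_two H B hD hus huseful hcard,
      fun huseless => absurd huseless huseful⟩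

end TwoEdgeDigraph

section CappedRows

variable {V : Type*} [Fintype V] {h c α : ℝ} {W : V → V → ℝ} {v x : V} {S : Finset V}

/-- Under the capacity `h` it is best to put weight `h` on a maximum of `b` and the remaining
weight `1` on a second largest value. -/
theorem exists_injective_sum_mul_le {w b : V → ℝ} (hvx : v ≠ x) (hw : ∀ t, 0 ≤ w t)
    (hsum : ∑ t, w t ≤ h + 1) (hcap : ∀ t, t ≠ x → w t ≤ h) (hb : ∀ t, 0 ≤ b t) (hbx : b x = 0) :
    ∃ ρ : Bool → V, Function.Injective ρ ∧ ∑ t, w t * b t ≤ h * b (ρ true) + b (ρ false) := by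
  obtain ⟨y, -, hy⟩ := exists_max_image univ b ⟨x, mem_univ x⟩
  have : Nontrivial V := ⟨v, x, hvx⟩
  obtain ⟨y', hy'⟩ := exists_ne y
  obtain ⟨z, hz, hzmax⟩ := exists_max_image (univ.erase y) b ⟨y', mem_erase.2 ⟨hy', mem_univ _⟩⟩
  refine ⟨fun ε => cond ε y z, Bool.injective_iff.2 (ne_of_mem_erase hz), ?_⟩
  change _ ≤ h * b y + b z
  rcases eq_or_ne y x with rfl | hyx
  · have hzero : ∀ t, b t = 0 := fun t => (hb t).antisymm' ((hy t (mem_univ t)).trans_eq hbx)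
    simp only [hzero, mul_zero, sum_const_zero, add_zero, le_refl]
  have hyz := hy z (mem_univ z)
  have hrest : ∑ t ∈ univ.erase y, w t * b t ≤ (∑ t ∈ univ.erase y, w t) * b z := by
    rw [sum_mul]
    exact sum_le_sum fun t ht => mul_le_mul_of_nonneg_left (hzmax t ht) (hw t)
  rw [← add_sum_erase _ _ (mem_univ y)] at hsum ⊢
  calc
    _ ≤ w y * b y + (h + 1 - w y) * b z := by
      refine add_le_add_right (hrest.trans (mul_le_mul_of_nonneg_right ?_ (hb z))) _
      exact le_sub_iff_add_le'.2 hsum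
    _ = h * b y + b z - (h - w y) * (b y - b z) := by ring
    _ ≤ h * b y + b z :=
      sub_le_self _ (mul_nonneg (sub_nonneg.2 (hcap y hyx)) (sub_nonneg.2 hyz))

variable [DecidableEq V]

theorem exists_pathSum_le_update_twoEdgeRow (hW : ∀ r t, 0 ≤ W r t) (hsum : ∑ t, W x t ≤ h + 1)
    (hcap : ∀ t, t ≠ x → W x t ≤ h) (hxv : x ≠ v) (S : Finset V) (u : V) :
    ∃ ρ : Bool → V, Function.Injective ρ ∧
      pathSum W v S u ≤ pathSum (Function.update W x (twoEdgeRow h ρ)) v S u := by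
  obtain ⟨ρ, hρ, hle⟩ := exists_injective_sum_mul_le hxv.symm (hW x) hsum hcap
    (fun t => pathSumVia_nonneg hW v x t S u) (pathSumVia_loop W hxv S u)
  refine ⟨ρ, hρ, ?_⟩
  rw [pathSum_eq_erase_add_sum_via W hxv, pathSum_update W hxv, sum_twoEdgeRow_mul h ρ _ true]
  simpa only [edgeWeight, cond, Bool.not_true, one_mul] using add_le_add_right hle _

theorem exists_pathSum_le_of_capped_rows (hh : 0 ≤ h) (hW : ∀ r t, 0 ≤ W r t)
    (hsum : ∀ r, ∑ t, W r t ≤ h + 1) (hcap : ∀ r t, r ≠ t → W r t ≤ h) {T : Finset V} (hv : v ∉ T)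
    (S : Finset V) (u : V) :
    ∃ W' : V → V → ℝ, (∀ r t, 0 ≤ W' r t) ∧ (∀ r ∉ T, W' r = W r) ∧
      (∀ r ∈ T, ∃ ρ, Function.Injective ρ ∧ W' r = twoEdgeRow h ρ) ∧
      pathSum W v S u ≤ pathSum W' v S u := by
  induction T using Finset.induction_on with
  | empty =>
    exact ⟨W, hW, fun _ _ => rfl, fun r hr => absurd hr (notMem_empty r), le_rfl⟩
  | insert x T hxT ih =>
    obtain ⟨W', hW', hout, hrow, hle⟩ := ih (mt mem_insert_of_mem hv)
    have hxv := ne_of_mem_of_not_mem (mem_insert_self x T) hv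
    obtain ⟨ρ, hρ, hle'⟩ := exists_pathSum_le_update_twoEdgeRow hW' (hout x hxT ▸ hsum x)
      (fun t ht => hout x hxT ▸ hcap x t ht.symm) hxv S u
    refine ⟨Function.update W' x (twoEdgeRow h ρ), fun r t => ?_, fun r hr => ?_, fun r hr => ?_,
      hle.trans hle'⟩
    · rcases eq_or_ne r x with rfl | hrx
      · rw [Function.update_self]
        exact twoEdgeRow_nonneg hh ρ t
      · rw [Function.update_of_ne hrx]
        exact hW' r t
    · rw [mem_insert, not_or] at hr
      rw [Function.update_of_ne hr.1, hout r hr.2]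
    · rcases eq_or_ne r x with rfl | hrx
      · exact ⟨ρ, hρ, Function.update_self ..⟩
      · rw [Function.update_of_ne hrx]
        exact hrow r (mem_of_mem_insert_of_ne hr hrx)

theorem pathSum_le_of_capped_rows (H : GrowthRate h c α) (hW : ∀ r t, 0 ≤ W r t)
    (hsum : ∀ r, ∑ t, W r t ≤ h + 1) (hcap : ∀ r t, r ≠ t → W r t ≤ h) (hv : v ∉ S) (u : V) :
    pathSum W v S u ≤ c * α ^ #S := by
  obtain ⟨W', -, -, hrow, hle⟩ := exists_pathSum_le_of_capped_rows H.nonneg hW hsum hcap hv S u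
  have : Nonempty V := ⟨u⟩
  choose! E hE hW' using hrow
  have hD : (⟨E, v, S⟩ : TwoEdgeDigraph V).Admissible := ⟨hv, hE⟩
  exact (hle.trans_eq (pathSum_congr hW' u)).trans (hD.isBounded H u).paths_le

end CappedRows

section Visited

variable {V : Type*} {f : V → V} {S s O : Finset V} {u r : V}

/-- Every vertex of `s \ O` is the image of one, so by finiteness `f` permutes `s \ O`. -/
theorem mem_of_apply_mem (hO : ∀ a ∈ O, f a ∈ O) (hsurj : ∀ v ∈ s, v ∉ O → ∃ w ∈ s, f w = v)
    (hr : r ∈ s) (hfr : f r ∈ O) : r ∈ O := by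
  have hsub : s \ O ⊆ (s \ O).image f := by
    intro v hv
    obtain ⟨hvs, hvO⟩ := mem_sdiff.1 hv
    obtain ⟨w, hw, rfl⟩ := hsurj v hvs hvO
    exact mem_image_of_mem f (mem_sdiff.2 ⟨hw, fun hwO => hvO (hO w hwO)⟩)
  have heq : s \ O = (s \ O).image f := eq_of_subset_of_card_le hsub card_image_le
  by_contra hrO
  have hmem := mem_image_of_mem f (mem_sdiff.2 ⟨hr, hrO⟩)
  exact (mem_sdiff.1 (heq ▸ hmem : f r ∈ s \ O)).2 hfr

variable [DecidableEq V]

/-- The vertices visited by iterating `f` from `u` inside `S`, stopping at the first vertex that is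
not in `S` or was visited before. -/
def visited (f : V → V) (S : Finset V) (u : V) : Finset V :=
  if _h : u ∈ S then insert u (visited f (S.erase u) (f u)) else ∅
termination_by S.card
decreasing_by exact card_erase_lt_of_mem ‹_›

theorem visited_of_mem (hu : u ∈ S) : visited f S u = insert u (visited f (S.erase u) (f u)) := by
  rw [visited, dif_pos hu]

theorem visited_of_notMem (hu : u ∉ S) : visited f S u = ∅ := by
  rw [visited, dif_neg hu]

theorem visited_subset (f : V → V) (S : Finset V) (u : V) : visited f S u ⊆ S := by
  induction S, u using erase_induction with
  | notMem S u hu => exact (visited_of_notMem hu).trans_subset (empty_subset S)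
  | mem S u hu ih =>
    rw [visited_of_mem hu]
    exact insert_subset hu ((ih _).trans (erase_subset ..))

theorem visited_subset_of_mapsTo (hs : ∀ r ∈ s, f r ∈ s) (S : Finset V) (hu : u ∈ s) :
    visited f S u ⊆ s := by
  induction S, u using erase_induction with
  | notMem S u huS => exact (visited_of_notMem huS).trans_subset (empty_subset s)
  | mem S u huS ih =>
    rw [visited_of_mem huS]
    exact insert_subset hu (ih _ (hs u hu))

theorem visited_congr {g : V → V} (hfg : ∀ r ∈ S, f r = g r) (u : V) :
    visited f S u = visited g S u := by
  induction S, u using erase_induction with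
  | notMem S u hu => rw [visited_of_notMem hu, visited_of_notMem hu]
  | mem S u hu ih =>
    rw [visited_of_mem hu, visited_of_mem hu, hfg u hu,
      ih _ fun r hr => hfg r (mem_of_mem_erase hr)]

theorem visited_update_erase (f : V → V) (S : Finset V) (u a t : V) :
    visited (Function.update f u a) (S.erase u) t = visited f (S.erase u) t :=
  visited_congr (fun _ hr => Function.update_of_ne (ne_of_mem_erase hr) ..) t

theorem notMem_visited_erase (f : V → V) (S : Finset V) (u t : V) : u ∉ visited f (S.erase u) t :=
  fun hu => notMem_erase u S (visited_subset f _ t hu)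

theorem mem_visited (f : V → V) (hu : u ∈ S) : u ∈ visited f S u := by
  rw [visited_of_mem hu]
  exact mem_insert_self ..

theorem apply_mem_visited (hr : r ∈ visited f S u) (hfr : f r ∈ S) : f r ∈ visited f S u := by
  induction S, u using erase_induction with
  | notMem S u hu => exact absurd hr (visited_of_notMem (f := f) hu ▸ notMem_empty r)
  | mem S u hu ih =>
    rw [visited_of_mem hu] at hr ⊢
    by_cases hfu : f r = u
    · exact hfu ▸ mem_insert_self ..
    have hfr' : f r ∈ S.erase u := mem_erase.2 ⟨hfu, hfr⟩
    refine mem_insert_of_mem ?_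
    rcases mem_insert.1 hr with rfl | hr
    · exact mem_visited f hfr'
    · exact ih _ hr hfr'

theorem visited_univ_eq_of_connected [Fintype V] (hu : u ∈ s) (hf : ∀ r ∈ s, f r ∈ s)
    (hsurj : ∀ v ∈ s, v ≠ u → ∃ w ∈ s, f w = v)
    (hconn : ∀ v ∈ s,
      Relation.ReflTransGen (fun a b => (a ∈ s ∧ f a = b) ∨ (b ∈ s ∧ f b = a)) u v) :
    visited f univ u = s := by
  have hclosed : ∀ a ∈ visited f univ u, f a ∈ visited f univ u := fun a ha =>
    apply_mem_visited ha (mem_univ _)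
  have hu' := mem_visited f (mem_univ u)
  refine (visited_subset_of_mapsTo hf _ hu).antisymm fun v hv => ?_
  have hpath := hconn v hv
  clear hv
  induction hpath with
  | refl => exact hu'
  | tail _ hstep ih =>
    rcases hstep with ⟨-, rfl⟩ | ⟨hs, rfl⟩
    · exact hclosed _ ih
    · exact mem_of_apply_mem hclosed
        (fun v hv hvO => hsurj v hv (ne_of_mem_of_not_mem hu' hvO).symm) hs ih

theorem exists_visited_univ_eq [Fintype V] (hne : s.Nonempty) (hf : ∀ r ∈ s, f r ∈ s)
    (hconn : ∀ u ∈ s, ∀ v ∈ s,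
      Relation.ReflTransGen (fun a b => (a ∈ s ∧ f a = b) ∨ (b ∈ s ∧ f b = a)) u v)
    (hsource : {v | v ∈ s ∧ ∀ u ∈ s, f u ≠ v}.Subsingleton) : ∃ u, visited f univ u = s := by
  by_cases hex : ∃ u ∈ s, ∀ w ∈ s, f w ≠ u
  · obtain ⟨u, hu, hu'⟩ := hex
    refine ⟨u, visited_univ_eq_of_connected hu hf (fun v hv hvu => ?_) (hconn u hu)⟩
    by_contra! hv'
    exact hvu (hsource ⟨hv, hv'⟩ ⟨hu, hu'⟩)
  · push Not at hex
    obtain ⟨u, hu⟩ := hne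
    exact ⟨u, visited_univ_eq_of_connected hu hf (fun v hv _ => hex v hv) (hconn u hu)⟩

end Visited

section OrbitSum

variable {V R : Type*} [Fintype V] [DecidableEq V] [CommSemiring R] {W : V → V → R}
  {S : Finset V} {u t : V} {f : V → V}

/-- The weight of the edges that `f` traverses from `u` inside `S`. So that every sequence of edges
counts once, `f` is required to be the identity elsewhere; otherwise the weight is `0`. -/
noncomputable def orbitWeight (W : V → V → R) (S : Finset V) (u : V) (f : V → V) : R :=
  if ∀ r ∉ visited f S u, f r = r then ∏ r ∈ visited f S u, W r (f r) else 0

/-- The weighted number of walks from `u` that continue until they leave `S` or return to a vertex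
visited before. -/
noncomputable def orbitSum (W : V → V → R) (S : Finset V) (u : V) : R :=
  ∑ f : V → V, orbitWeight W S u f

theorem orbitWeight_eq_zero {r : V} (hr : r ∉ visited f S u) (hfr : f r ≠ r) :
    orbitWeight W S u f = 0 :=
  if_neg fun h => hfr (h r hr)

theorem orbitWeight_update (hu : u ∈ S) (hf : f u = u) (t : V) :
    orbitWeight W S u (Function.update f u t) = W u t * orbitWeight W (S.erase u) t f := by
  have hvisited : visited (Function.update f u t) S u = insert u (visited f (S.erase u) t) := by
    rw [visited_of_mem hu, Function.update_self, visited_update_erase]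
  have hfix : (∀ r ∉ insert u (visited f (S.erase u) t), Function.update f u t r = r) ↔
      ∀ r ∉ visited f (S.erase u) t, f r = r := by
    refine forall_congr' fun r => ?_
    rcases eq_or_ne r u with rfl | hru
    · simp only [mem_insert_self, not_true, false_imp_iff, hf, implies_true]
    · rw [mem_insert, or_iff_right hru, Function.update_of_ne hru]
  rw [orbitWeight, hvisited, if_congr hfix rfl rfl, orbitWeight, mul_ite, mul_zero,
    prod_insert (notMem_visited_erase f S u t), Function.update_self]
  refine if_congr Iff.rfl (congrArg _ (prod_congr rfl fun r hr => ?_)) rfl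
  rw [Function.update_of_ne (ne_of_mem_of_not_mem hr (notMem_visited_erase f S u t))]

theorem sum_eq_sum_sum_update (F : (V → V) → R) (u : V) :
    ∑ f, F f = ∑ t, ∑ f with f u = u, F (Function.update f u t) := by
  rw [← sum_fiberwise univ fun f => f u]
  refine sum_congr rfl fun t _ => sum_bij' (fun f _ => Function.update f u u)
    (fun f _ => Function.update f u t) ?_ ?_ ?_ ?_ ?_
  · intro f _
    simp only [mem_filter, mem_univ, Function.update_self, and_self]
  · intro f _
    simp only [mem_filter, mem_univ, Function.update_self, and_self]
  · intro f hf
    rw [Function.update_idem, ← (mem_filter.1 hf).2, Function.update_eq_self]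
  · intro f hf
    rw [Function.update_idem]
    exact Function.update_eq_self_iff.2 (mem_filter.1 hf).2.symm
  · intro f hf
    rw [Function.update_idem, ← (mem_filter.1 hf).2, Function.update_eq_self]

theorem orbitSum_of_notMem (hu : u ∉ S) : orbitSum W S u = 1 := by
  rw [orbitSum, Fintype.sum_eq_single id]
  · rw [orbitWeight, visited_of_notMem hu, prod_empty]
    exact if_pos fun _ _ => rfl
  · intro f hf
    obtain ⟨r, hr⟩ := Function.ne_iff.1 hf
    exact orbitWeight_eq_zero (visited_of_notMem (f := f) hu ▸ notMem_empty r) hr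

theorem orbitSum_of_mem (hu : u ∈ S) :
    orbitSum W S u = ∑ t, W u t * orbitSum W (S.erase u) t := by
  rw [orbitSum, sum_eq_sum_sum_update _ u]
  refine sum_congr rfl fun t _ => ?_
  calc
    _ = ∑ f with f u = u, W u t * orbitWeight W (S.erase u) t f :=
      sum_congr rfl fun f hf => orbitWeight_update hu (mem_filter.1 hf).2 t
    _ = ∑ f, W u t * orbitWeight W (S.erase u) t f :=
      sum_filter_of_ne fun f _ hne => by
        by_contra hfu
        exact hne (by rw [orbitWeight_eq_zero (notMem_visited_erase f S u t) hfu, mul_zero])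
    _ = W u t * orbitSum W (S.erase u) t := (mul_sum ..).symm

theorem sum_pathSum_erase_of_mem (hu : u ∈ S) : ∑ v ∈ S, pathSum W v (S.erase v) u =
    1 + ∑ t, W u t * ∑ v ∈ S.erase u, pathSum W v ((S.erase u).erase v) t := by
  rw [← add_sum_erase _ _ hu, pathSum_sink]
  simp only [mul_sum]
  rw [sum_comm]
  refine congrArg _ (sum_congr rfl fun v hv => ?_)
  have huv := (ne_of_mem_erase hv).symm
  rw [pathSum_of_mem huv (mem_erase.2 ⟨huv, hu⟩), erase_right_comm]

variable [PartialOrder R] [IsOrderedRing R]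

/-- A walk that stays in `S` until it returns to a vertex visited before is a simple path followed
by a closing edge. -/
theorem orbitSum_le {K : R} (hW : ∀ r t, 0 ≤ W r t) (hsum : ∀ r, ∑ t, W r t ≤ K)
    (S : Finset V) (u : V) : orbitSum W S u ≤
      (if u ∈ S then 0 else 1) + K * ∑ v ∈ S, pathSum W v (S.erase v) u := by
  have hK : 0 ≤ K := (sum_nonneg fun t _ => hW u t).trans (hsum u)
  induction S, u using erase_induction with
  | notMem S u hu =>
    rw [orbitSum_of_notMem hu, if_neg hu]
    exact le_add_of_nonneg_right (mul_nonneg hK (sum_nonneg fun v _ => pathSum_nonneg hW ..))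
  | mem S u hu ih =>
    have hone : ∀ t, (if t ∈ S.erase u then 0 else 1 : R) ≤ 1 := fun t => by
      split_ifs
      exacts [zero_le_one, le_rfl]
    rw [if_pos hu, zero_add, orbitSum_of_mem hu]
    calc
      _ ≤ ∑ t, W u t * (1 + K * ∑ v ∈ S.erase u, pathSum W v ((S.erase u).erase v) t) :=
        sum_le_sum fun t _ =>
          mul_le_mul_of_nonneg_left ((ih t).trans (add_le_add_left (hone t) _)) (hW u t)
      _ = ∑ t, W u t +
          K * ∑ t, W u t * ∑ v ∈ S.erase u, pathSum W v ((S.erase u).erase v) t := by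
        simp only [mul_add, mul_one, sum_add_distrib, mul_left_comm _ K, ← mul_sum]
      _ ≤ K * ∑ v ∈ S, pathSum W v (S.erase v) u := by
        rw [sum_pathSum_erase_of_mem hu, mul_add, mul_one]
        exact add_le_add_left (hsum u) _

end OrbitSum

section PathCycles

variable {V : Type*} [Fintype V] [DecidableEq V]

theorem pathCycleCount_le_sum_orbitSum (G : V → V → ℕ) :
    pathCycleCount G ≤ ∑ u, orbitSum G univ u := by
  simp only [orbitSum]
  rw [pathCycleCount, sum_comm, sum_comm (s := univ (α := V))]
  refine sum_le_sum fun f _ => ?_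
  rw [← sum_fiberwise univ fun u => visited f univ u]
  refine sum_le_sum fun s _ => ?_
  split_ifs with hs
  swap
  · exact Nat.zero_le _
  obtain ⟨hne, hfix, hf, hconn, hsource⟩ := hs
  obtain ⟨u, rfl⟩ := exists_visited_univ_eq hne hf hconn fun v hv w hw =>
    card_le_one.1 hsource v (mem_filter.2 hv) w (mem_filter.2 hw)
  calc
    _ = orbitWeight G univ u f := (if_pos hfix).symm
    _ ≤ ∑ u' with visited f univ u' = visited f univ u, orbitWeight G univ u' f :=
      single_le_sum (f := fun u' => orbitWeight G univ u' f) (fun _ _ => Nat.zero_le _)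
        (mem_filter.2 ⟨mem_univ u, rfl⟩)

theorem pathCycleCount_le_mul_sum_pathSum {k : ℕ} {G : V → V → ℕ} (hdeg : ∀ v, ∑ u, G v u ≤ k) :
    pathCycleCount G ≤ k * ∑ u, ∑ v, pathSum G v (univ.erase v) u := by
  rw [mul_sum]
  refine (pathCycleCount_le_sum_orbitSum G).trans (sum_le_sum fun u _ => ?_)
  simpa only [mem_univ, if_true, zero_add] using
    orbitSum_le (fun r t => Nat.zero_le (G r t)) hdeg univ u

end PathCycles

theorem stmt_8_general {V : Type*} [Fintype V] [DecidableEq V] {k : ℕ} (hk : 2 ≤ k)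
    (G : V → V → ℕ) (hdeg : ∀ v, ∑ u, G v u ≤ k) (hmult : ∀ u v, u ≠ v → G u v ≤ k - 1) :
    (pathCycleCount G : ℝ) ≤
      3 / 2 * (Fintype.card V : ℝ) ^ 2 * k * alphaK k ^ (Fintype.card V - 1) := by
  have H := growthRate_alphaK hk
  have hsum : ∀ r, ∑ t, (G r t : ℝ) ≤ k - 1 + 1 := fun r => by
    rw [sub_add_cancel]
    exact_mod_cast hdeg r
  have hcap : ∀ r t, r ≠ t → (G r t : ℝ) ≤ k - 1 := fun r t hrt => by
    rw [← Nat.cast_pred (zero_lt_two.trans_le hk)]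
    exact_mod_cast hmult r t hrt
  have hpath : ∀ u v, ((pathSum G v (univ.erase v) u : ℕ) : ℝ) ≤
      3 / 2 * alphaK k ^ (Fintype.card V - 1) := fun u v => by
    have hle := pathSum_le_of_capped_rows H (fun r t => Nat.cast_nonneg (G r t)) hsum hcap
      (notMem_erase v univ) u
    rw [card_erase_of_mem (mem_univ v), card_univ] at hle
    exact (map_pathSum (Nat.castRingHom ℝ) G v _ u).trans_le
      (hle.trans (mul_le_mul_of_nonneg_right H.const_le (pow_nonneg H.pos.le _)))
  calc
    (pathCycleCount G : ℝ) ≤ k * ∑ u, ∑ v, ((pathSum G v (univ.erase v) u : ℕ) : ℝ) := by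
      exact_mod_cast pathCycleCount_le_mul_sum_pathSum hdeg
    _ ≤ k * ∑ _u : V, ∑ _v : V, 3 / 2 * alphaK k ^ (Fintype.card V - 1) := by
      gcongr with u _ v _
      exact hpath u v
    _ = _ := by
      simp only [sum_const, card_univ, nsmul_eq_mul]
      ring

theorem stmt_8 (n k : ℕ) (hn : 1 ≤ n) (hk : 2 ≤ k) (G : Fin n → Fin n → ℕ)
    (hdeg : ∀ v : Fin n, (∑ u, G v u) = k)
    (hmult : ∀ u v : Fin n, u ≠ v → G u v ≤ k - 1) :
    (pathCycleCount G : ℝ) ≤ 5 * (n : ℝ) ^ 2 * (k : ℝ) * alphaK k ^ (n - 1) := by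
  have hle := stmt_8_general hk G (fun v => (hdeg v).le) hmult
  rw [Fintype.card_fin] at hle
  refine hle.trans ?_
  have hα := (growthRate_alphaK hk).pos.le
  gcongr
  norm_num
end
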